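/- arXiv:2512.10686 — 2 statements merged into one kernel-verified Lean document; each statement's English description precedes it below -/
import Mathlib

section
/- Let S be a nonnegative symmetric Borel measure on ℝ^d with ∫_{ℝ^d}(1+‖u‖)^{−d−1} dS(u) < ∞ which is stealthy, i.e. S(O) = 0 for some nonempty open set O ⊆ ℝ^d. Then for every closed strictly convex cone B ⊆ ℝ^d (a closed convex set with λB ⊆ B for all λ ≥ 0 and B ∩ (−B) = {0}), S induces linear maximal rigidity on B. -/
open MeasureTheory Complex
open scoped RealInnerProductSpace Pointwise

noncomputable section

abbrev Ed (d : ℕ) := EuclideanSpace ℝ (Fin d)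

/-- Fourier transform `f̂(u) = ∫ e^{-i⟨u,x⟩} f(x) dx`. -/
def FT {d : ℕ} (f : Ed d → ℂ) (u : Ed d) : ℂ :=
  ∫ x : Ed d, Complex.exp (-Complex.I * (⟪u, x⟫ : ℝ)) * f x

/-- `f` is bounded, measurable, with bounded support contained in `A`. -/
def IsCBS {d : ℕ} (A : Set (Ed d)) (f : Ed d → ℂ) : Prop :=
  Measurable f ∧ (∃ C : ℝ, ∀ x, ‖f x‖ ≤ C) ∧
    Bornology.IsBounded (Function.support f) ∧ Function.support f ⊆ A

/-- `S` induces linear maximal rigidity on `A`. -/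
def LMR {d : ℕ} (S : Measure (Ed d)) (A : Set (Ed d)) : Prop :=
  ∀ f : Ed d → ℂ, IsCBS A f → ∀ ε : ℝ, 0 < ε →
    ∃ h : Ed d → ℂ, IsCBS Aᶜ h ∧ (∫ u, ‖FT f u - FT h u‖ ^ 2 ∂S) < ε

open Filter Topology FourierTransform

lemma oneD_div {F : ℝ → ℂ} {δ : ℝ} (hδ : 0 < δ) (hF : Integrable F)
    (h0 : ∀ t, |t| < δ → F t = 0) (hz : ∀ w ≤ 0, 𝓕 F w = 0) :
    Integrable (fun t => F t * (t⁻¹ : ℝ)) ∧ (∀ t, |t| < δ → F t * (t⁻¹ : ℝ) = 0) ∧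
    (∀ w ≤ 0, 𝓕 (fun t => F t * ((t⁻¹ : ℝ) : ℂ)) w = 0) := by
  have hI : Integrable (fun t => F t * (t⁻¹ : ℝ)) := by
    refine (hF.norm.mul_const δ⁻¹).mono' (hF.aestronglyMeasurable.mul
      (by fun_prop)) (.of_forall fun t => ?_)
    rw [norm_mul]
    by_cases h : |t| < δ
    · simp [h0 t h]
    · gcongr
      simp only [Complex.norm_real, norm_inv, Real.norm_eq_abs]
      gcongr
      linarith
  refine ⟨hI, fun t ht => by simp [h0 t ht], ?_⟩
  set F1 : ℝ → ℂ := fun t => F t * (t⁻¹ : ℝ) with hF1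
  have hxF : ∀ x : ℝ, x • F1 x = F x := by
    intro x
    by_cases h : x = 0
    · subst h; simp [h0 0 (by simpa using hδ)]
    · simp only [hF1, Complex.real_smul]
      push_cast
      have : (x : ℂ) ≠ 0 := by exact_mod_cast h
      field_simp
  have hd : ∀ w, HasDerivAt (𝓕 F1) ((-2 * Real.pi * I) * 𝓕 F w) w := by
    intro w
    have := Real.hasDerivAt_fourier hI (by simpa only [hxF] using hF) w
    suffices hs : (-2 * Real.pi * I) * 𝓕 F w =
        𝓕 (fun x : ℝ => (-2 * Real.pi * I * x : ℂ) • F1 x) w by rw [hs]; exact this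
    have e : (fun x : ℝ => (-2 * Real.pi * I * x : ℂ) • F1 x) = fun x => (-2 * Real.pi * I) • F x := by
      funext x
      rw [← hxF x, Complex.real_smul]
      simp; ring
    rw [e]
    rw [Real.fourier_eq, Real.fourier_eq, ← integral_const_mul]
    congr 1; ext v; simp [Circle.smul_def]; ring
  have hconst : ∀ w ≤ 0, ∀ w' ≤ 0, 𝓕 F1 w = 𝓕 F1 w' := by
    intro w hw w' hw'
    have := Convex.norm_image_sub_le_of_norm_hasDerivWithin_le (f := 𝓕 F1)
      (f' := fun w => (-2 * Real.pi * I) * 𝓕 F w) (s := Set.Iic 0) (C := 0)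
      (fun x _ => (hd x).hasDerivWithinAt) (fun x hx => by simp [hz x hx]) (convex_Iic 0) hw' hw
    simpa [sub_eq_zero] using this
  have hlim : Tendsto (𝓕 F1) atBot (𝓝 0) := (Real.zero_at_infty_fourier F1).mono_left
    (by rw [cocompact_eq_atBot_atTop]; exact le_sup_left)
  intro w hw
  have h2 : Tendsto (𝓕 F1) atBot (𝓝 (𝓕 F1 w)) := by
    refine tendsto_const_nhds.congr' ?_
    filter_upwards [eventually_le_atBot (0:ℝ)] with w' hw' using hconst w hw w' hw'
  exact tendsto_nhds_unique h2 hlim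

lemma oneD_pow {F : ℝ → ℂ} {δ : ℝ} (hδ : 0 < δ) (hF : Integrable F)
    (h0 : ∀ t, |t| < δ → F t = 0) (hz : ∀ w ≤ 0, 𝓕 F w = 0) (n : ℕ) :
    Integrable (fun t => F t * ((t⁻¹ : ℝ) : ℂ) ^ n) ∧
    (∀ t, |t| < δ → F t * ((t⁻¹ : ℝ) : ℂ) ^ n = 0) ∧
    (∀ w ≤ 0, 𝓕 (fun t => F t * ((t⁻¹ : ℝ) : ℂ) ^ n) w = 0) := by
  induction n with
  | zero => simpa using ⟨hF, h0, hz⟩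
  | succ n ih =>
    have := oneD_div hδ ih.1 ih.2.1 ih.2.2
    simpa only [pow_succ, mul_assoc] using this

lemma oneD_cont {F : ℝ → ℂ} {δ : ℝ} (hδ : 0 < δ) (hF : Integrable F)
    (h0 : ∀ t, |t| < δ → F t = 0) (hz : ∀ w ≤ 0, 𝓕 F w = 0) (b : ℝ → ℝ) (hb : Continuous b) :
    ∫ t, F t * (b t⁻¹ : ℝ) = 0 := by
  have hpoly : ∀ p : Polynomial ℝ, Integrable (fun t => F t * ((p.eval t⁻¹ : ℝ) : ℂ)) ∧
      ∫ t, F t * ((p.eval t⁻¹ : ℝ) : ℂ) = 0 := by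
    intro p
    induction p using Polynomial.induction_on' with
    | add p q hp hq =>
      simp only [Polynomial.eval_add, Complex.ofReal_add, mul_add]
      exact ⟨hp.1.add hq.1, by rw [integral_add hp.1 hq.1, hp.2, hq.2, add_zero]⟩
    | monomial n a =>
      have h := oneD_pow hδ hF h0 hz n
      have e : ∀ t : ℝ, F t * (((Polynomial.monomial n a).eval t⁻¹ : ℝ) : ℂ) =
          a * (F t * ((t⁻¹ : ℝ) : ℂ) ^ n) := by
        intro t; simp [Polynomial.eval_monomial]; ring
      simp only [e]
      refine ⟨h.1.const_mul _, ?_⟩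
      rw [integral_const_mul]
      have := h.2.2 0 le_rfl
      rw [Real.fourier_eq] at this
      simp at this
      simp [this]
  have key : ∀ ε > 0, ‖∫ t, F t * (b t⁻¹ : ℝ)‖ ≤ ε * ∫ t, ‖F t‖ := by
    intro ε hε
    obtain ⟨p, hp⟩ := exists_polynomial_near_of_continuousOn (-δ⁻¹) δ⁻¹ b hb.continuousOn ε hε
    have hbd : ∀ t, ‖F t * (b t⁻¹ : ℝ) - F t * ((p.eval t⁻¹ : ℝ) : ℂ)‖ ≤ ε * ‖F t‖ := by
      intro t
      by_cases h : |t| < δ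
      · simp [h0 t h]
      · push Not at h
        have : |t⁻¹| ≤ δ⁻¹ := by rw [abs_inv]; gcongr
        have := hp t⁻¹ (by rw [Set.mem_Icc]; exact abs_le.mp this)
        rw [← mul_sub, norm_mul, ← Complex.ofReal_sub, Complex.norm_real, Real.norm_eq_abs,
          abs_sub_comm, mul_comm]
        gcongr
    have hmeas : AEStronglyMeasurable (fun t => F t * ((b t⁻¹ : ℝ) : ℂ)) volume :=
      hF.aestronglyMeasurable.mul
        ((Complex.measurable_ofReal.comp (hb.measurable.comp measurable_inv)).aestronglyMeasurable)
    have hdiff : Integrable (fun t => F t * (b t⁻¹ : ℝ) - F t * ((p.eval t⁻¹ : ℝ) : ℂ)) :=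
      (hF.norm.const_mul ε).mono' (hmeas.sub (hpoly p).1.aestronglyMeasurable) (.of_forall hbd)
    have hint : Integrable (fun t => F t * ((b t⁻¹ : ℝ) : ℂ)) := by
      refine (hdiff.add (hpoly p).1).congr (.of_forall fun t => ?_)
      simp
    have e : ∫ t, F t * (b t⁻¹ : ℝ) = ∫ t, (F t * (b t⁻¹ : ℝ) - F t * ((p.eval t⁻¹ : ℝ) : ℂ)) := by
      rw [integral_sub hint (hpoly p).1, (hpoly p).2, sub_zero]
    rw [e, ← integral_const_mul]
    exact norm_integral_le_of_norm_le (hF.norm.const_mul ε) (.of_forall hbd)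
  have hlim : Tendsto (fun ε : ℝ => ε * ∫ t, ‖F t‖) (𝓝[>] 0) (𝓝 0) := by
    have : Continuous (fun ε : ℝ => ε * ∫ t, ‖F t‖) := by fun_prop
    simpa using (this.tendsto 0).mono_left nhdsWithin_le_nhds
  have := ge_of_tendsto hlim (eventually_nhdsWithin_of_forall fun ε hε => key ε hε)
  simpa using this

lemma oneD {F : ℝ → ℂ} {δ : ℝ} (hδ : 0 < δ) (hF : Integrable F)
    (h0 : ∀ t, |t| < δ → F t = 0) (hz : ∀ w ≤ 0, 𝓕 F w = 0) : F =ᵐ[volume] 0 := by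
  have hU : IsOpen ({0}ᶜ : Set ℝ) := isOpen_compl_singleton
  have := hU.ae_eq_zero_of_integral_contDiff_smul_eq_zero (f := F) (μ := volume)
    (hF.locallyIntegrable.locallyIntegrableOn _) (by
      intro g hg hgc hgs
      have hg0 : g 0 = 0 := by
        by_contra h
        exact hgs (subset_tsupport _ h) rfl
      obtain ⟨R, hR⟩ := hgc.isCompact.isBounded.subset_closedBall 0
      have hb : Continuous (fun s : ℝ => g s⁻¹) := by
        rw [continuous_iff_continuousAt]
        intro s
        by_cases hs : s = 0
        · subst hs
          have : (fun s : ℝ => g s⁻¹) =ᶠ[𝓝 0] fun _ => 0 := by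
            have h1 : Metric.ball (0:ℝ) ((|R| + 1)⁻¹) ∈ 𝓝 (0:ℝ) :=
              Metric.ball_mem_nhds _ (by positivity)
            filter_upwards [h1] with s hs
            by_contra hgs0
            have h2 := hR (subset_tsupport _ hgs0)
            have hs0 : s ≠ 0 := by rintro rfl; simp [hg0] at hgs0
            simp only [Metric.mem_closedBall, dist_zero_right, norm_inv, Real.norm_eq_abs,
              Metric.mem_ball] at h2 hs
            have h3 : |s|⁻¹ ≤ |R| := h2.trans (le_abs_self R)
            have h4 := (lt_inv_comm₀ (by positivity) (by positivity)).mp hs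
            linarith
          exact continuousAt_const.congr this.symm
        · exact hg.continuous.continuousAt.comp (continuousAt_inv₀ hs)
      have := oneD_cont hδ hF h0 hz _ hb
      simp only [inv_inv] at this
      rw [← this]
      congr 1; ext t; rw [Complex.real_smul, mul_comm])
  have h2 : ∀ᵐ t : ℝ ∂volume, t ∈ ({0}ᶜ : Set ℝ) := by
    rw [ae_iff]; simp
  filter_upwards [this, h2] with t ht ht2 using ht ht2

lemma fourier_mul {E V : Type*} [NormedAddCommGroup E] [InnerProductSpace ℝ E]
    [FiniteDimensional ℝ E] [MeasurableSpace E] [BorelSpace E] 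
    [NormedAddCommGroup V] [InnerProductSpace ℝ V]
    [FiniteDimensional ℝ V] [MeasurableSpace V] [BorelSpace V]
    {p : E → ℂ} (hp : Integrable p) {ρ : V → ℂ} (hρ : Integrable ρ) (l : V → E) (hl : Continuous l)
    (m : E → ℂ) (hm : ∀ x, m x = ∫ v, 𝐞 ⟪l v, x⟫ • ρ v) (u : E) :
    𝓕 (fun x => p x * m x) u = ∫ v, ρ v * 𝓕 p (u - l v) := by
  simp only [Real.fourier_eq, hm, Circle.smul_def, smul_eq_mul, ← integral_const_mul]
  rw [integral_integral_swap]
  · congr 1; ext v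
    congr 1; ext x
    simp only [inner_sub_right, neg_sub]
    rw [sub_eq_add_neg, AddChar.map_add_eq_mul, Circle.coe_mul, real_inner_comm x (l v)]
    ring
  · have h1 := hp.mul_prod hρ
    refine h1.norm.mono' ?_ (.of_forall fun z => ?_)
    · have h2 := h1.aestronglyMeasurable
      have c : Continuous fun z : E × V => ((𝐞 (-⟪z.1, u⟫) : ℂ) * 𝐞 ⟪l z.2, z.1⟫) := by
        fun_prop
      refine (c.aestronglyMeasurable.mul h2).congr (.of_forall fun z => ?_)
      simp [Function.uncurry]; ring
    · simp only [Function.uncurry, norm_mul, Circle.norm_coe, one_mul]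
      exact le_rfl

noncomputable def Wt (N : ℕ) {E : Type*} [NormedAddCommGroup E] (u : E) : ℝ := ((1 + ‖u‖) ^ N)⁻¹

section wt
variable {E : Type*} [NormedAddCommGroup E]

lemma Wt_pos (N : ℕ) (u : E) : 0 < Wt N u := by unfold Wt; positivity

lemma Wt_le_one (N : ℕ) (u : E) : Wt N u ≤ 1 := by
  unfold Wt
  exact inv_le_one_of_one_le₀ (one_le_pow₀ (by linarith [norm_nonneg u]))

lemma Wt_cont (N : ℕ) : Continuous (Wt N : E → ℝ) := by
  unfold Wt
  exact Continuous.inv₀ (by fun_prop) (fun u => by positivity)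

lemma Wt_sub (N : ℕ) (u w : E) : Wt N (u - w) ≤ (1 + ‖w‖) ^ N * Wt N u := by
  unfold Wt
  rw [← div_eq_mul_inv, inv_eq_one_div, div_le_div_iff₀ (by positivity) (by positivity), one_mul,
    ← mul_pow]
  gcongr
  have : ‖u‖ ≤ ‖u - w‖ + ‖w‖ := by simpa using norm_add_le (u - w) w
  nlinarith [norm_nonneg (u - w), norm_nonneg w]

lemma schwartz_decay [NormedSpace ℝ E] (N : ℕ) (f : SchwartzMap E ℂ) :
    ∃ C, 0 ≤ C ∧ ∀ u, ‖f u‖ ≤ C * Wt N u := by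
  refine ⟨2 ^ N * ((Finset.Iic (N, 0)).sup fun m => SchwartzMap.seminorm ℝ m.1 m.2) f,
    mul_nonneg (by positivity) (apply_nonneg _ _), fun u => ?_⟩
  have := SchwartzMap.one_add_le_sup_seminorm_apply (𝕜 := ℝ) (m := (N, 0)) (k := N) (n := 0)
    le_rfl le_rfl f u
  rw [norm_iteratedFDeriv_zero] at this
  unfold Wt
  rw [← div_eq_mul_inv, le_div_iff₀ (by positivity), mul_comm]
  exact this

lemma schwartz_int [InnerProductSpace ℝ E] [FiniteDimensional ℝ E] [MeasurableSpace E]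
    [BorelSpace E] (N : ℕ) (a : ℝ) (ha : 0 ≤ a) (f : SchwartzMap E ℂ) :
    Integrable (fun v => ‖f v‖ * (1 + a * ‖v‖) ^ N) := by
  have h1 := f.integrable_pow_mul volume N
  have h2 := f.integrable (μ := volume)
  refine ((h2.norm.add h1).const_mul ((1 + a) ^ N * 2 ^ (N - 1))).mono' (by fun_prop)
    (.of_forall fun v => ?_)
  rw [Real.norm_of_nonneg (by positivity)]
  have : (1 + a * ‖v‖) ^ N ≤ (1 + a) ^ N * (2 ^ (N - 1) * (1 ^ N + ‖v‖ ^ N)) := by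
    calc (1 + a * ‖v‖) ^ N ≤ ((1 + a) * (1 + ‖v‖)) ^ N := by
          gcongr; nlinarith [norm_nonneg v]
      _ = (1 + a) ^ N * (1 + ‖v‖) ^ N := mul_pow _ _ _
      _ ≤ _ := by gcongr; exact add_pow_le (by norm_num) (norm_nonneg v) N
  calc ‖f v‖ * (1 + a * ‖v‖) ^ N ≤ ‖f v‖ * ((1 + a) ^ N * (2 ^ (N - 1) * (1 ^ N + ‖v‖ ^ N))) := by
        gcongr
    _ = _ := by simp; ring

/-- bound for convolution integrand -/
lemma conv_pt {V : Type*} [NormedAddCommGroup V] (N : ℕ) {P : E → ℂ} {C : ℝ} (hC : 0 ≤ C)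
    (hP : ∀ u, ‖P u‖ ≤ C * Wt N u) (ρ : V → ℂ) {a : ℝ} {l : V → E} (hl : ∀ v, ‖l v‖ ≤ a * ‖v‖)
    (u : E) (v : V) :
    ‖ρ v * P (u - l v)‖ ≤ (‖ρ v‖ * (1 + a * ‖v‖) ^ N) * (C * Wt N u) := by
  rw [norm_mul]
  calc ‖ρ v‖ * ‖P (u - l v)‖ ≤ ‖ρ v‖ * (C * ((1 + ‖l v‖) ^ N * Wt N u)) := by
        gcongr
        refine (hP _).trans ?_
        gcongr
        exact Wt_sub N u (l v)
    _ ≤ ‖ρ v‖ * (C * ((1 + a * ‖v‖) ^ N * Wt N u)) := by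
        have := (Wt_pos N u).le
        gcongr
        exact hl v
    _ = _ := by ring

lemma conv_bd {V : Type*} [NormedAddCommGroup V] [MeasureSpace V] (N : ℕ) {P : E → ℂ} {C : ℝ}
    (hC : 0 ≤ C)
    (hP : ∀ u, ‖P u‖ ≤ C * Wt N u) (ρ : V → ℂ) {a : ℝ} {l : V → E} (hl : ∀ v, ‖l v‖ ≤ a * ‖v‖)
    (hρ : Integrable (fun v => ‖ρ v‖ * (1 + a * ‖v‖) ^ N)) (u : E) :
    ‖∫ v, ρ v * P (u - l v)‖ ≤ ((∫ v, ‖ρ v‖ * (1 + a * ‖v‖) ^ N) * C) * Wt N u := by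
  rw [mul_assoc, ← integral_mul_const]
  exact norm_integral_le_of_norm_le (hρ.mul_const _) (.of_forall (conv_pt N hC hP ρ hl u))
end wt

lemma schwartz_inv {E : Type*} [NormedAddCommGroup E] [InnerProductSpace ℝ E]
    [FiniteDimensional ℝ E] [MeasurableSpace E] [BorelSpace E] (f : SchwartzMap E ℂ) (x : E) :
    f x = ∫ v, 𝐞 ⟪v, x⟫ • (𝓕 f : SchwartzMap E ℂ) v := by
  have h : 𝓕⁻ (𝓕 f) = f := FourierTransform.fourierInv_fourier_eq f
  have h2 : (𝓕⁻ (𝓕 f) : SchwartzMap E ℂ) x = f x := by rw [h]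
  rw [← h2, SchwartzMap.fourierInv_coe, Real.fourierInv_eq]

lemma exists_chi (E : Type*) [NormedAddCommGroup E] [InnerProductSpace ℝ E]
    [FiniteDimensional ℝ E] : ∃ χ : SchwartzMap E ℂ, χ 0 = 1 ∧ HasCompactSupport χ := by
  let b : ContDiffBump (0 : E) := ⟨1, 2, one_pos, one_lt_two⟩
  have h1 : HasCompactSupport (fun x => ((b x : ℝ) : ℂ)) := by
    exact b.hasCompactSupport.comp_left (g := fun r : ℝ => (r : ℂ)) (by simp)
  have h2 : ContDiff ℝ ((⊤ : ℕ∞) : WithTop ℕ∞) (fun x => ((b x : ℝ) : ℂ)) :=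
    Complex.ofRealCLM.contDiff.comp b.contDiff
  refine ⟨h1.toSchwartzMap h2, ?_, h1⟩
  have : b 0 = 1 := b.one_of_mem_closedBall (by simp [b])
  simp [this]

lemma exists_j (η : ℝ) : ∃ j : SchwartzMap ℝ ℂ, (∀ s, 0 ≤ s → j s = 0) ∧
    (𝓕 j : SchwartzMap ℝ ℂ) η ≠ 0 := by
  let b : ContDiffBump (-3 : ℝ) := ⟨1, 2, one_pos, one_lt_two⟩
  let f : ℝ → ℂ := fun x => ((b x : ℝ) : ℂ) * Complex.exp (2 * Real.pi * I * η * x)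
  have h1 : HasCompactSupport f := by
    refine HasCompactSupport.mul_right ?_
    exact b.hasCompactSupport.comp_left (g := fun r : ℝ => (r : ℂ)) (by simp)
  have h2 : ContDiff ℝ ((⊤ : ℕ∞) : WithTop ℕ∞) f := by
    refine (Complex.ofRealCLM.contDiff.comp b.contDiff).mul ?_
    refine ContDiff.cexp ?_
    exact contDiff_const.mul Complex.ofRealCLM.contDiff
  refine ⟨h1.toSchwartzMap h2, fun s hs => ?_, ?_⟩
  · have : b s = 0 := b.zero_of_le_dist (by
      simp only [b, Real.dist_eq]; rw [abs_of_nonneg] <;> linarith)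
    simp [f, this]
  · rw [SchwartzMap.fourier_coe, Real.fourier_eq]
    have e : ∀ v : ℝ, 𝐞 (-⟪v, η⟫) • (h1.toSchwartzMap h2) v = ((b v : ℝ) : ℂ) := by
      intro v
      have e0 : (h1.toSchwartzMap h2) v = f v := rfl
      simp only [e0, f, Circle.smul_def, smul_eq_mul]
      rw [Real.fourierChar_apply, mul_left_comm, ← Complex.exp_add]
      have : (2 * Real.pi * (-⟪v, η⟫ : ℝ) : ℝ) * I + 2 * Real.pi * I * η * v = 0 := by
        simp; ring
      rw [this]; simp
    simp only [e]
    rw [integral_complex_ofReal]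
    exact_mod_cast b.integral_pos.ne'

lemma fourier_cont {E : Type*} [NormedAddCommGroup E] [InnerProductSpace ℝ E]
    [FiniteDimensional ℝ E] [MeasurableSpace E] [BorelSpace E] {f : E → ℂ} (hf : Integrable f) :
    Continuous (𝓕 f) :=
  VectorFourier.fourierIntegral_continuous Real.continuous_fourierChar
    (by exact continuous_inner) hf

lemma wt_int {d N : ℕ} {S : Measure (Ed d)} {γ : Ed d → ℂ}
    (hγ : Integrable (fun u => (Wt N u : ℂ) * γ u) S) :
    AEStronglyMeasurable γ S := by
  have h := hγ.aestronglyMeasurable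
  have c : Continuous (fun u : Ed d => (((Wt N u)⁻¹ : ℝ) : ℂ)) :=
    Complex.continuous_ofReal.comp ((Wt_cont N).inv₀ fun u => (Wt_pos N u).ne')
  refine (c.aestronglyMeasurable.mul h).congr (.of_forall fun u => ?_)
  have : (Wt N u : ℂ) ≠ 0 := by exact_mod_cast (Wt_pos N u).ne'
  simp [this]

lemma wt_mul_bd {d N : ℕ} {γ : Ed d → ℂ}
    (u : Ed d) {C : ℝ} {z : ℂ} (hz : ‖z‖ ≤ C * Wt N u) :
    ‖γ u * z‖ ≤ C * ‖(Wt N u : ℂ) * γ u‖ := by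
  rw [norm_mul, norm_mul, Complex.norm_real, Real.norm_of_nonneg (Wt_pos N u).le, mul_comm]
  calc ‖z‖ * ‖γ u‖ ≤ (C * Wt N u) * ‖γ u‖ := by gcongr
    _ = _ := by ring

lemma orth_schwartz {d N : ℕ} {S : Measure (Ed d)} {γ : Ed d → ℂ} {B : Set (Ed d)}
    (hγ : Integrable (fun u => (Wt N u : ℂ) * γ u) S)
    (horth : ∀ h : Ed d → ℂ, IsCBS Bᶜ h → (∃ C, 0 ≤ C ∧ ∀ u, ‖𝓕 h u‖ ≤ C * Wt N u) →
      ∫ u, γ u * 𝓕 h u ∂S = 0)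
    (e : Ed d) (he : ∀ x ∈ B, 0 ≤ ⟪e, x⟫) (j : SchwartzMap ℝ ℂ) (hj : ∀ s, 0 ≤ s → j s = 0)
    (r : ℝ) (hr : 0 ≤ r) (ψ : SchwartzMap (Ed d) ℂ) :
    ∫ u, γ u * (∫ t : ℝ, (𝐞 (t * r) • (𝓕 j : SchwartzMap ℝ ℂ) t) * ψ (u - t • e)) ∂S = 0 := by
  obtain ⟨χ, hχ0, hχc⟩ := exists_chi (Ed d)
  set p : SchwartzMap (Ed d) ℂ := 𝓕⁻ ψ with hpdef
  set ρ : SchwartzMap (Ed d) ℂ := 𝓕 χ with hρdef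
  set J : SchwartzMap ℝ ℂ := 𝓕 j with hJdef
  have hFp : 𝓕 (p : Ed d → ℂ) = ψ := by
    rw [← SchwartzMap.fourier_coe, hpdef, FourierTransform.fourier_fourierInv_eq]
  let ρ1 : ℝ → ℂ := fun t => 𝐞 (t * r) • J t
  have hρ1n : ∀ t, ‖ρ1 t‖ = ‖J t‖ := fun t => by
    simp only [ρ1, Circle.smul_def, norm_smul, Circle.norm_coe, one_mul]
  let a : ℕ → ℝ := fun n => ((n : ℝ) + 1)⁻¹
  have ha0 : ∀ n, 0 < a n := fun n => by positivity
  have ha1 : ∀ n, a n ≤ 1 := fun n => inv_le_one_of_one_le₀ (by linarith [n.cast_nonneg (α := ℝ)])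
  let pn : ℕ → Ed d → ℂ := fun n x => p x * χ (a n • x)
  let Pn : ℕ → Ed d → ℂ := fun n u => ∫ v, ρ v * ψ (u - a n • v)
  let hn : ℕ → Ed d → ℂ := fun n x => pn n x * j (⟪e, x⟫ + r)
  obtain ⟨C, hC0, hC⟩ := schwartz_decay N ψ
  obtain ⟨Cχ, hCχ0, hCχ⟩ := schwartz_decay 0 χ
  obtain ⟨Cp, hCp0, hCp⟩ := schwartz_decay 0 p
  obtain ⟨Cj, hCj0, hCj⟩ := schwartz_decay 0 j
  simp only [Wt, pow_zero, inv_one, mul_one] at hCχ hCp hCj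
  have hpnc : ∀ n, Continuous (pn n) := fun n => by
    have := χ.continuous; have := p.continuous
    fun_prop
  have hpn_int : ∀ n, Integrable (pn n) := fun n => by
    refine (p.integrable.norm.mul_const Cχ).mono' (hpnc n).aestronglyMeasurable
      (.of_forall fun x => ?_)
    rw [norm_mul]; gcongr; exact hCχ _
  have hρi := schwartz_int N 1 zero_le_one ρ
  have hJi := schwartz_int N ‖e‖ (norm_nonneg e) J
  have hρ1i : Integrable (fun v => ‖ρ1 v‖ * (1 + ‖e‖ * ‖v‖) ^ N) := by simpa only [hρ1n] using hJi
  have hρ1c : Continuous ρ1 := by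
    have := J.continuous
    simp only [ρ1, Circle.smul_def]
    fun_prop
  have hρ1int : Integrable ρ1 := J.integrable.norm.mono' hρ1c.aestronglyMeasurable
    (.of_forall fun t => (hρ1n t).le)
  have hla : ∀ n, ∀ v : Ed d, ‖a n • v‖ ≤ 1 * ‖v‖ := fun n v => by
    rw [norm_smul, Real.norm_of_nonneg (ha0 n).le]; gcongr; exact ha1 n
  have hle : ∀ t : ℝ, ‖t • e‖ ≤ ‖e‖ * ‖t‖ := fun t => by rw [norm_smul, mul_comm]
  have hFpn : ∀ n, 𝓕 (pn n) = Pn n := by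
    intro n; funext u
    rw [fourier_mul p.integrable ρ.integrable (fun v => a n • v) (by fun_prop)
      (fun x => χ (a n • x)) (fun x => ?_) u, hFp]
    rw [schwartz_inv χ]
    simp only [inner_smul_left, inner_smul_right]
    rfl
  have hFhn : ∀ n, 𝓕 (hn n) = fun u => ∫ t, ρ1 t * Pn n (u - t • e) := by
    intro n; funext u
    rw [fourier_mul (hpn_int n) hρ1int (fun t => t • e) (by fun_prop)
      (fun x => j (⟪e, x⟫ + r)) (fun x => ?_) u, hFpn]
    rw [schwartz_inv j]
    congr 1; ext t
    simp only [ρ1, smul_smul, ← AddChar.map_add_eq_mul]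
    congr 2
    rw [inner_smul_left]
    simp [mul_add, mul_comm]
  set A := (∫ v, ‖ρ v‖ * (1 + 1 * ‖v‖) ^ N) * C with hA
  have hA0 : 0 ≤ A := mul_nonneg (integral_nonneg fun v => by positivity) hC0
  have hPn : ∀ n u, ‖Pn n u‖ ≤ A * Wt N u := fun n u =>
    conv_bd N hC0 hC ρ (hla n) hρi u
  set A' := (∫ v, ‖ρ1 v‖ * (1 + ‖e‖ * ‖v‖) ^ N) * A with hA'
  have hA'0 : 0 ≤ A' := mul_nonneg (integral_nonneg fun v => by positivity) hA0
  have hQn : ∀ n u, ‖𝓕 (hn n) u‖ ≤ A' * Wt N u := fun n u => by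
    rw [hFhn]
    exact conv_bd N hA0 (hPn n) ρ1 hle hρ1i u
  have hcbs : ∀ n, IsCBS Bᶜ (hn n) := by
    intro n
    refine ⟨?_, ⟨Cp * Cχ * Cj, fun x => ?_⟩, ?_, ?_⟩
    · have := j.continuous; have := hpnc n
      exact Continuous.measurable (by fun_prop)
    · simp only [hn, pn, norm_mul]
      gcongr
      · exact hCp x
      · exact hCχ _
      · exact hCj _
    · obtain ⟨R, hR⟩ := hχc.isCompact.isBounded.subset_closedBall 0
      refine (Metric.isBounded_closedBall (x := (0 : Ed d)) (r := (a n)⁻¹ * R)).subset fun x hx => ?_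
      have h1 : χ (a n • x) ≠ 0 := by
        intro h; apply hx; simp [hn, pn, h]
      have h2 := hR (subset_tsupport _ h1)
      simp only [Metric.mem_closedBall, dist_zero_right, norm_smul,
        Real.norm_of_nonneg (ha0 n).le] at h2 ⊢
      rw [inv_mul_eq_div, le_div_iff₀ (ha0 n), mul_comm]; exact h2
    · intro x hx hxB
      apply hx
      simp [hn, hj _ (add_nonneg (he x hxB) hr)]
  have h0 : ∀ n, ∫ u, γ u * 𝓕 (hn n) u ∂S = 0 := fun n => horth _ (hcbs n) ⟨A', hA'0, hQn n⟩
  have ha_lim : Tendsto a atTop (𝓝 0) := by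
    have := tendsto_one_div_add_atTop_nhds_zero_nat (𝕜 := ℝ)
    simpa [a] using this
  have hPlim : ∀ u, Tendsto (fun n => Pn n u) atTop (𝓝 (ψ u)) := by
    intro u
    have hρ1 : ∫ v, ρ v = 1 := by
      have := schwartz_inv χ 0
      simp only [inner_zero_right, AddChar.map_zero_eq_one, one_smul, hχ0] at this
      exact this.symm
    have : ∫ v, ρ v * ψ u = ψ u := by rw [integral_mul_const, hρ1, one_mul]
    rw [← this]
    refine tendsto_integral_of_dominated_convergence _ (fun n => ?_)
      (hρi.mul_const (C * Wt N u)) (fun n => .of_forall (conv_pt N hC0 hC ρ (hla n) u))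
      (.of_forall fun v => ?_)
    · have := ρ.continuous; have := ψ.continuous
      exact Continuous.aestronglyMeasurable (by fun_prop)
    · have h1 : Tendsto (fun n => u - a n • v) atTop (𝓝 (u - (0:ℝ) • v)) :=
        tendsto_const_nhds.sub (ha_lim.smul_const v)
      simp only [zero_smul, sub_zero] at h1
      exact ((ψ.continuous.tendsto u).comp h1).const_mul _
  have hPm : ∀ n, Continuous (Pn n) := fun n => by
    rw [← hFpn]
    exact fourier_cont (hpn_int n)
  have hQlim : ∀ u, Tendsto (fun n => 𝓕 (hn n) u) atTop (𝓝 (∫ t, ρ1 t * ψ (u - t • e))) := by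
    intro u
    simp only [hFhn]
    refine tendsto_integral_of_dominated_convergence _ (fun n => ?_)
      (hρ1i.mul_const (A * Wt N u)) (fun n => .of_forall (conv_pt N hA0 (hPn n) ρ1 hle u))
      (.of_forall fun v => (hPlim _).const_mul _)
    have := hPm n
    exact Continuous.aestronglyMeasurable (by fun_prop)
  have hhn_int : ∀ n, Integrable (hn n) := fun n => by
    have := j.continuous; have := hpnc n
    refine ((hpn_int n).norm.mul_const Cj).mono' (Continuous.aestronglyMeasurable (by fun_prop))
      (.of_forall fun x => ?_)
    simp only [hn, norm_mul]; gcongr; exact hCj _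
  have hfin := tendsto_integral_of_dominated_convergence (μ := S)
    (F := fun n u => γ u * 𝓕 (hn n) u) (f := fun u => γ u * ∫ t, ρ1 t * ψ (u - t • e))
    (fun u => A' * ‖(Wt N u : ℂ) * γ u‖)
    (fun n => (wt_int hγ).mul (fourier_cont (hhn_int n)).aestronglyMeasurable)
    (hγ.norm.const_mul A') (fun n => .of_forall fun u => wt_mul_bd u (hQn n u))
    (.of_forall fun u => (hQlim u).const_mul _)
  simp only [h0] at hfin
  exact (tendsto_nhds_unique hfin tendsto_const_nhds)

lemma G_zero {d N : ℕ} {S : Measure (Ed d)} [SFinite S] {γ : Ed d → ℂ} {B : Set (Ed d)}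
    (hγ : Integrable (fun u => (Wt N u : ℂ) * γ u) S)
    (horth : ∀ h : Ed d → ℂ, IsCBS Bᶜ h → (∃ C, 0 ≤ C ∧ ∀ u, ‖𝓕 h u‖ ≤ C * Wt N u) →
      ∫ u, γ u * 𝓕 h u ∂S = 0)
    (e : Ed d) (he : ∀ x ∈ B, 0 ≤ ⟪e, x⟫) (ψ : SchwartzMap (Ed d) ℂ) {δ : ℝ} (hδ : 0 < δ)
    (hψ : ∀ t : ℝ, |t| < δ → ∫ u, γ u * ψ (u - t • e) ∂S = 0) (t : ℝ) :
    ∫ u, γ u * ψ (u - t • e) ∂S = 0 := by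
  obtain ⟨j, hj, hjt⟩ := exists_j t
  set J : SchwartzMap ℝ ℂ := 𝓕 j with hJdef
  let G : ℝ → ℂ := fun t => ∫ u, γ u * ψ (u - t • e) ∂S
  obtain ⟨C, hC0, hC⟩ := schwartz_decay N ψ
  have hbd : ∀ (t : ℝ) (u : Ed d), ‖ψ (u - t • e)‖ ≤ (C * (1 + ‖e‖ * ‖t‖) ^ N) * Wt N u := fun t u => by
    refine (hC _).trans ?_
    rw [mul_assoc]
    gcongr
    refine (Wt_sub N u (t • e)).trans ?_
    rw [norm_smul, mul_comm ‖t‖]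
  have hγm := wt_int hγ
  have hψc := ψ.continuous
  have hGm : ∀ t : ℝ, AEStronglyMeasurable (fun u => γ u * ψ (u - t • e)) S := fun t =>
    hγm.mul (Continuous.aestronglyMeasurable (by fun_prop))
  have hGc : Continuous G := by
    rw [continuous_iff_continuousAt]
    intro t0
    refine continuousAt_of_dominated
      (bound := fun u => (C * (1 + ‖e‖ * (‖t0‖ + 1)) ^ N) * ‖(Wt N u : ℂ) * γ u‖)
      (.of_forall hGm) ?_ (hγ.norm.const_mul _) (.of_forall fun u => ?_)
    · filter_upwards [Metric.ball_mem_nhds t0 one_pos] with t ht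
      refine .of_forall fun u => wt_mul_bd u ((hbd t u).trans ?_)
      have := (Wt_pos N u).le
      have h2 : ‖t‖ ≤ ‖t0‖ + 1 := by
        have := norm_sub_norm_le t t0
        rw [Metric.mem_ball, dist_eq_norm] at ht
        linarith
      gcongr
    · exact Continuous.continuousAt (by fun_prop)
  have hGb : ∀ t, ‖G t‖ ≤ (C * (1 + ‖e‖ * ‖t‖) ^ N) * ∫ u, ‖(Wt N u : ℂ) * γ u‖ ∂S := fun t => by
    rw [← integral_const_mul]
    exact norm_integral_le_of_norm_le (hγ.norm.const_mul _)
      (.of_forall fun u => wt_mul_bd u (hbd t u))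
  have hJi := schwartz_int N ‖e‖ (norm_nonneg e) J
  have hJc := J.continuous
  have hF : Integrable (fun t => J t * G t) := by
    refine (hJi.mul_const (C * ∫ u, ‖(Wt N u : ℂ) * γ u‖ ∂S)).mono'
      (Continuous.aestronglyMeasurable (by fun_prop)) (.of_forall fun t => ?_)
    rw [norm_mul]
    calc _ ≤ ‖J t‖ * ((C * (1 + ‖e‖ * ‖t‖) ^ N) * ∫ u, ‖(Wt N u : ℂ) * γ u‖ ∂S) := by
          gcongr; exact hGb t
      _ = _ := by ring
  have hz : ∀ w ≤ 0, 𝓕 (fun t => J t * G t) w = 0 := by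
    intro w hw
    have h := orth_schwartz hγ horth e he j hj (-w) (by linarith) ψ
    rw [Real.fourier_eq, ← h]
    simp only [G, ← integral_const_mul, Circle.smul_def, smul_eq_mul]
    rw [integral_integral_swap]
    · congr 1; ext u; congr 1; ext t
      have : -⟪t, w⟫ = t * -w := by simp [mul_comm]
      rw [this]; ring
    · have h1 := hJi.mul_prod ((hγ.norm).const_mul C)
      refine h1.mono' ?_ (.of_forall fun z => ?_)
      · have c : Continuous fun z : ℝ × Ed d => (𝐞 (-⟪z.1, w⟫) : ℂ) * J z.1 * ψ (z.2 - z.1 • e) := by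
          fun_prop
        have m2 : AEStronglyMeasurable (fun z : ℝ × Ed d => γ z.2) (volume.prod S) :=
          hγm.comp_snd
        refine (c.aestronglyMeasurable.mul m2).congr (.of_forall fun z => ?_)
        simp [Function.uncurry]; ring
      · simp only [Function.uncurry]
        rw [norm_mul, norm_mul, Circle.norm_coe, one_mul]
        have h5 := wt_mul_bd (γ := γ) z.2 (hbd z.1 z.2)
        refine (mul_le_mul_of_nonneg_left h5 (norm_nonneg (J z.1))).trans (le_of_eq ?_)
        ring
  have hae := oneD hδ hF (fun t ht => by simp only [G]; rw [hψ t ht, mul_zero]) hz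
  have := (Continuous.ae_eq_iff_eq volume (by fun_prop) continuous_const).mp hae
  have h2 : J t * G t = 0 := congrFun this t
  exact (mul_eq_zero.mp h2).resolve_left hjt

lemma core {d N : ℕ} {S : Measure (Ed d)} [SFinite S] {γ : Ed d → ℂ} {B : Set (Ed d)}
    (hγ : Integrable (fun u => (Wt N u : ℂ) * γ u) S)
    (horth : ∀ h : Ed d → ℂ, IsCBS Bᶜ h → (∃ C, 0 ≤ C ∧ ∀ u, ‖𝓕 h u‖ ≤ C * Wt N u) →
      ∫ u, γ u * 𝓕 h u ∂S = 0)
    (hspan : Submodule.span ℝ {e : Ed d | ∀ x ∈ B, 0 ≤ ⟪e, x⟫} = ⊤)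
    {O : Set (Ed d)} (hO : IsOpen O) (hOne : O.Nonempty) (hSO : S O = 0) :
    γ =ᵐ[S] 0 := by
  let Z : Set (Ed d) := {w | ∃ ε > 0, ∀ᵐ u ∂S, u ∈ Metric.ball w ε → γ u = 0}
  have hstep : ∀ e : Ed d, (∀ x ∈ B, 0 ≤ ⟪e, x⟫) → ∀ w ∈ Z, ∀ t : ℝ, w + t • e ∈ Z := by
    rintro e he w ⟨ε, hε, hw⟩ t
    refine ⟨ε / 2, half_pos hε, ?_⟩
    refine Metric.isOpen_ball.ae_eq_zero_of_integral_contDiff_smul_eq_zero ?_ ?_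
    · refine LocallyIntegrable.locallyIntegrableOn ?_ _
      have h := hγ.locallyIntegrable
      have c : Continuous (fun u : Ed d => (((Wt N u)⁻¹ : ℝ) : ℂ)) :=
        Complex.continuous_ofReal.comp ((Wt_cont N).inv₀ fun u => (Wt_pos N u).ne')
      intro x
      have h3 := (h x)
      obtain ⟨K, hK, hKx⟩ := exists_compact_mem_nhds x
      have h4 : IntegrableOn (fun u => (((Wt N u)⁻¹ : ℝ) : ℂ) * ((Wt N u : ℂ) * γ u)) K S :=
        hγ.integrableOn.continuousOn_mul c.continuousOn hK
      refine ⟨K, hKx, h4.congr (.of_forall fun u => ?_)⟩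
      have : (Wt N u : ℂ) ≠ 0 := by exact_mod_cast (Wt_pos N u).ne'
      simp [this]
    · intro g hg hgc hgs
      let f : Ed d → ℂ := fun x => ((g (x + t • e) : ℝ) : ℂ)
      have h1 : HasCompactSupport f := by
        have h11 : HasCompactSupport (fun x => ((g x : ℝ) : ℂ)) :=
          hgc.comp_left (g := fun r : ℝ => (r : ℂ)) (by simp)
        exact h11.comp_homeomorph (Homeomorph.addRight (t • e))
      have h2 : ContDiff ℝ ((⊤ : ℕ∞) : WithTop ℕ∞) f :=
        Complex.ofRealCLM.contDiff.comp (hg.comp (contDiff_id.add contDiff_const))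
      have hfs : ∀ x, f x ≠ 0 → x ∈ Metric.ball w (ε / 2) := by
        intro x hx
        have : x + t • e ∈ Metric.ball (w + t • e) (ε / 2) := hgs (subset_tsupport _ (by
          intro h; apply hx; simp [f, h]))
        simpa using this
      have := G_zero hγ horth e he (h1.toSchwartzMap h2) (δ := ε / 2 / (‖e‖ + 1)) (by positivity)
        (fun s hs => ?_) t
      · rw [← this]
        congr 1; ext u
        have e0 : (h1.toSchwartzMap h2) (u - t • e) = f (u - t • e) := rfl
        rw [e0]
        simp [f, mul_comm]
      · refine integral_eq_zero_of_ae ?_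
        filter_upwards [hw] with u hu
        have e0 : (h1.toSchwartzMap h2) (u - s • e) = f (u - s • e) := rfl
        rw [e0]
        by_cases hf : f (u - s • e) = 0
        · simp [hf]
        · rw [hu ?_]
          · simp
          · have := hfs _ hf
            rw [Metric.mem_ball, dist_eq_norm] at this ⊢
            have hs2 : ‖s • e‖ ≤ ε / 2 := by
              rw [norm_smul, Real.norm_eq_abs]
              rw [lt_div_iff₀ (by positivity)] at hs
              nlinarith [abs_nonneg s, norm_nonneg e]
            calc ‖u - w‖ = ‖(u - s • e - w) + s • e‖ := by congr 1; abel
              _ ≤ _ := norm_add_le _ _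
              _ < ε := by linarith
  have hall : ∀ v : Ed d, ∀ w ∈ Z, ∀ t : ℝ, w + t • v ∈ Z := by
    intro v
    have hv : v ∈ Submodule.span ℝ {e : Ed d | ∀ x ∈ B, 0 ≤ ⟪e, x⟫} := by rw [hspan]; trivial
    induction hv using Submodule.span_induction with
    | mem e he => exact hstep e he
    | zero => intro w hw t; simpa using hw
    | add x y _ _ hx hy =>
      intro w hw t
      rw [smul_add, ← add_assoc]
      exact hy _ (hx w hw t) t
    | smul a x _ hx =>
      intro w hw t
      rw [smul_smul]
      exact hx w hw _
  obtain ⟨w0, hw0⟩ := hOne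
  have hw0Z : w0 ∈ Z := by
    obtain ⟨ε, hε, hb⟩ := Metric.isOpen_iff.mp hO w0 hw0
    refine ⟨ε, hε, ?_⟩
    have : ∀ᵐ u ∂S, u ∉ O := measure_eq_zero_iff_ae_notMem.mp hSO
    filter_upwards [this] with u hu hub
    exact absurd (hb hub) hu
  have hZ : ∀ w, w ∈ Z := fun w => by
    have := hall (w - w0) w0 hw0Z 1
    simpa using this
  rw [Filter.EventuallyEq, ae_iff]
  refine measure_null_of_locally_null _ fun x _ => ?_
  obtain ⟨ε, hε, hx⟩ := hZ x
  refine ⟨{u | ¬ (u ∈ Metric.ball x ε → γ u = 0)}, ?_, ae_iff.mp hx⟩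
  rw [mem_nhdsWithin]
  refine ⟨Metric.ball x ε, Metric.isOpen_ball, Metric.mem_ball_self hε, ?_⟩
  rintro u ⟨hu1, hu2⟩ h
  exact hu2 (h hu1)

lemma span_dual {d : ℕ} (B : Set (Ed d)) (hBclosed : IsClosed B) (hBconvex : Convex ℝ B)
    (hBcone : ∀ c : ℝ, 0 ≤ c → c • B ⊆ B)
    (hBstrict : B ∩ (-B) = {0}) :
    Submodule.span ℝ {e : Ed d | ∀ x ∈ B, 0 ≤ ⟪e, x⟫} = ⊤ := by
  have h0 : (0 : Ed d) ∈ B := by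
    have : (0 : Ed d) ∈ B ∩ (-B) := by rw [hBstrict]; rfl
    exact this.1
  have hsm : ∀ c : ℝ, 0 ≤ c → ∀ x ∈ B, c • x ∈ B := fun c hc x hx =>
    hBcone c hc (Set.smul_mem_smul_set hx)
  let K : ProperCone ℝ (Ed d) :=
    { carrier := B
      add_mem' := fun {x y} hx hy => by
        have := hBconvex hx hy (a := 1/2) (b := 1/2) (by norm_num) (by norm_num) (by norm_num)
        have := hsm 2 (by norm_num) _ this
        simpa [smul_smul] using this
      zero_mem' := h0
      smul_mem' := fun c x hx => hsm c c.2 x hx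
      isClosed' := hBclosed }
  rw [← Submodule.orthogonal_eq_bot_iff, Submodule.eq_bot_iff]
  intro x hx
  have key : ∀ y : Ed d, y ∈ (Submodule.span ℝ {e : Ed d | ∀ x ∈ B, 0 ≤ ⟪e, x⟫})ᗮ → y ∈ B := by
    intro y hy
    by_contra hyB
    obtain ⟨f, hf, hf0⟩ := ProperCone.hyperplane_separation' K (x₀ := y) hyB
    have h1 : f ∈ Submodule.span ℝ {e : Ed d | ∀ x ∈ B, 0 ≤ ⟪e, x⟫} :=
      Submodule.subset_span fun x hx => by rw [real_inner_comm]; exact hf x hx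
    have := Submodule.inner_right_of_mem_orthogonal h1 hy
    rw [real_inner_comm] at this
    linarith
  have : x ∈ B ∩ (-B) := ⟨key x hx, key (-x) (Submodule.neg_mem _ hx)⟩
  rw [hBstrict] at this
  exact this

lemma IsCBS.integrable {d : ℕ} {A : Set (Ed d)} {f : Ed d → ℂ} (hf : IsCBS A f) :
    Integrable f := by
  obtain ⟨hm, ⟨C, hC⟩, hb, -⟩ := hf
  obtain ⟨R, hR⟩ := hb.subset_closedBall 0
  have : IntegrableOn f (Metric.closedBall 0 R) :=
    Measure.integrableOn_of_bounded (M := C)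
      (measure_closedBall_lt_top.ne) hm.aestronglyMeasurable (.of_forall hC)
  exact (integrableOn_iff_integrable_of_support_subset hR).mp this

lemma IsCBS.add {d : ℕ} {A : Set (Ed d)} {f g : Ed d → ℂ} (hf : IsCBS A f) (hg : IsCBS A g) :
    IsCBS A (f + g) := by
  obtain ⟨hm, ⟨C, hC⟩, hb, hs⟩ := hf
  obtain ⟨hm', ⟨C', hC'⟩, hb', hs'⟩ := hg
  exact ⟨hm.add hm', ⟨C + C', fun x => (norm_add_le _ _).trans (add_le_add (hC x) (hC' x))⟩,
    (hb.union hb').subset (Function.support_add _ _),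
    (Function.support_add _ _).trans (Set.union_subset hs hs')⟩

lemma IsCBS.smul {d : ℕ} {A : Set (Ed d)} {f : Ed d → ℂ} (hf : IsCBS A f) (c : ℂ) :
    IsCBS A (c • f) := by
  obtain ⟨hm, ⟨C, hC⟩, hb, hs⟩ := hf
  have h : Function.support (c • f) ⊆ Function.support f := Function.support_const_smul_subset _ _
  refine ⟨hm.const_smul c, ⟨‖c‖ * C, fun x => ?_⟩, hb.subset h, h.trans hs⟩
  rw [Pi.smul_apply, norm_smul]; gcongr; exact hC x

lemma IsCBS.zero {d : ℕ} {A : Set (Ed d)} : IsCBS A (0 : Ed d → ℂ) :=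
  ⟨measurable_zero, ⟨0, by simp⟩, by simp, by simp⟩

lemma FT_eq {d : ℕ} (f : Ed d → ℂ) (u : Ed d) : FT f u = 𝓕 f ((2 * Real.pi)⁻¹ • u) := by
  rw [Real.fourier_eq, FT]
  congr 1; ext x
  rw [Circle.smul_def, Real.fourierChar_apply, smul_eq_mul, inner_smul_right, real_inner_comm]
  congr 2
  have : (Real.pi : ℂ) ≠ 0 := by exact_mod_cast Real.pi_ne_zero
  push_cast
  field_simp

lemma sigmaFinite_of_wt {d N : ℕ} {S : Measure (Ed d)} (hW : Integrable (Wt N) S) :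
    SigmaFinite S := by
  have : IsLocallyFiniteMeasure S := ⟨fun x => by
    refine ⟨{u | Wt N x / 2 < Wt N u}, ?_, ?_⟩
    · exact (isOpen_lt continuous_const (Wt_cont N)).mem_nhds (half_lt_self (Wt_pos N x))
    · exact hW.measure_gt_lt_top (half_pos (Wt_pos N x))⟩
  infer_instance

lemma memLp_wt {d N : ℕ} {S : Measure (Ed d)} (hW : Integrable (Wt N) S) :
    MemLp (fun u => (Wt N u : ℂ)) 2 S := by
  have hm : AEStronglyMeasurable (fun u : Ed d => (Wt N u : ℂ)) S :=
    (Complex.continuous_ofReal.comp (Wt_cont N)).aestronglyMeasurable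
  refine (memLp_two_iff_integrable_sq_norm hm).mpr ?_
  refine hW.mono' ?_ (.of_forall fun u => ?_)
  · have := Wt_cont N (E := Ed d)
    exact Continuous.aestronglyMeasurable (by fun_prop)
  · have h1 := Wt_pos N u
    have h2 := Wt_le_one N u
    rw [Complex.norm_real, Real.norm_of_nonneg h1.le, Real.norm_of_nonneg (by positivity)]
    nlinarith

lemma density {d N : ℕ} (S : Measure (Ed d)) (hW : Integrable (Wt N) S)
    {O : Set (Ed d)} (hO : IsOpen O) (hOne : O.Nonempty) (hSO : S O = 0)
    (B : Set (Ed d)) 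
    (hspan : Submodule.span ℝ {e : Ed d | ∀ x ∈ B, 0 ≤ ⟪e, x⟫} = ⊤)
    (φ : Ed d → ℂ) (hφ : MemLp φ 2 S) (ε : ℝ) (hε : 0 < ε) :
    ∃ h : Ed d → ℂ, IsCBS Bᶜ h ∧ (∫ u, ‖φ u - 𝓕 h u‖ ^ 2 ∂S) < ε := by
  have := sigmaFinite_of_wt hW
  let K : Submodule ℂ (Lp ℂ 2 S) :=
    { carrier := {q | ∃ h : Ed d → ℂ, IsCBS Bᶜ h ∧ q =ᵐ[S] 𝓕 h}
      add_mem' := by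
        rintro q q' ⟨h, hh, hq⟩ ⟨h', hh', hq'⟩
        refine ⟨h + h', hh.add hh', ?_⟩
        have e : 𝓕 (h + h') = 𝓕 h + 𝓕 h' := by
          funext u
          simp only [Real.fourier_eq, Pi.add_apply, smul_add]
          exact integral_add ((Real.fourierIntegral_convergent_iff u).mpr hh.integrable)
            ((Real.fourierIntegral_convergent_iff u).mpr hh'.integrable)
        rw [e]
        exact (Lp.coeFn_add q q').trans (hq.add hq')
      zero_mem' := by
        refine ⟨0, IsCBS.zero, ?_⟩
        have e : 𝓕 (0 : Ed d → ℂ) = 0 := by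
          funext u; simp [Real.fourier_eq]
        rw [e]
        exact Lp.coeFn_zero _ _ _
      smul_mem' := by
        rintro c q ⟨h, hh, hq⟩
        refine ⟨c • h, hh.smul c, ?_⟩
        have e : 𝓕 (c • h) = c • 𝓕 h := by
          funext u
          simp only [Real.fourier_eq, Pi.smul_apply, smul_eq_mul, ← integral_const_mul]
          congr 1; ext v; simp [Circle.smul_def]; ring
        rw [e]
        exact (Lp.coeFn_smul c q).trans (hq.const_smul c) }
  have hK : K.topologicalClosure = ⊤ := by
    rw [Submodule.topologicalClosure_eq_top_iff, Submodule.eq_bot_iff]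
    intro g hg
    let γ : Ed d → ℂ := fun u => (starRingEnd ℂ) (g u)
    have hgL : MemLp g 2 S := Lp.memLp g
    have hγL : MemLp γ 2 S := hgL.star
    have hγ : Integrable (fun u => (Wt N u : ℂ) * γ u) S := (memLp_wt hW).integrable_mul hγL
    have hz : γ =ᵐ[S] 0 := by
      refine core hγ ?_ hspan hO hOne hSO
      rintro h hh ⟨C, hC0, hC⟩
      have hL : MemLp (𝓕 h) 2 S := by
        refine MemLp.of_le_mul (memLp_wt hW) (fourier_cont hh.integrable).aestronglyMeasurable
          (c := C) (.of_forall fun u => ?_)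
        rw [Complex.norm_real, Real.norm_of_nonneg (Wt_pos N u).le]
        exact hC u
      have h1 := (Submodule.mem_orthogonal' K g).mp hg (hL.toLp _) ⟨h, hh, hL.coeFn_toLp⟩
      rw [L2.inner_def] at h1
      rw [← h1]
      refine integral_congr_ae ?_
      filter_upwards [hL.coeFn_toLp] with u hu
      rw [hu]
      simp [γ, mul_comm]
    refine (Lp.eq_zero_iff_ae_eq_zero).mpr ?_
    filter_upwards [hz] with u hu
    simpa [γ] using hu
  have hmem : hφ.toLp φ ∈ closure (K : Set (Lp ℂ 2 S)) := by
    have : hφ.toLp φ ∈ K.topologicalClosure := by rw [hK]; trivial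
    exact this
  obtain ⟨q, ⟨h, hh, hq⟩, hd⟩ := Metric.mem_closure_iff.mp hmem (Real.sqrt ε) (Real.sqrt_pos.mpr hε)
  refine ⟨h, hh, ?_⟩
  have h1 : ‖hφ.toLp φ - q‖ ^ 2 < ε := by
    rw [dist_eq_norm] at hd
    exact (Real.lt_sqrt (norm_nonneg _)).mp hd
  refine lt_of_eq_of_lt ?_ h1
  have h2 := inner_self_eq_norm_sq_to_K (𝕜 := ℂ) (hφ.toLp φ - q)
  rw [L2.inner_def] at h2
  have h3 : ∫ a, inner ℂ ((hφ.toLp φ - q : Lp ℂ 2 S) a) ((hφ.toLp φ - q : Lp ℂ 2 S) a) ∂S =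
      ∫ u, ((‖φ u - 𝓕 h u‖ ^ 2 : ℝ) : ℂ) ∂S := by
    refine integral_congr_ae ?_
    filter_upwards [Lp.coeFn_sub (hφ.toLp φ) q, hφ.coeFn_toLp, hq] with u h4 h5 h6
    rw [inner_self_eq_norm_sq_to_K, h4, Pi.sub_apply, h5, h6]
    simp
  rw [h3, integral_complex_ofReal] at h2
  apply Complex.ofReal_injective
  rw [h2, Complex.ofReal_pow]
  rfl

/-- Theorem 4: a stealthy measure (spectral measure vanishing on a nonempty open set)
induces linear maximal rigidity on every closed strictly convex cone. -/
theorem stealthy_rigid_on_strictly_convex_cone {d : ℕ}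
    (S : Measure (Ed d))
    (hsymm : Measure.map (fun u : Ed d => -u) S = S)
    (hint : (∫⁻ u, ENNReal.ofReal (((1 + ‖u‖) ^ (d + 1))⁻¹) ∂S) < ⊤)
    (hstealthy : ∃ O : Set (Ed d), IsOpen O ∧ O.Nonempty ∧ S O = 0)
    (B : Set (Ed d)) (hBclosed : IsClosed B) (hBconvex : Convex ℝ B)
    (hBcone : ∀ c : ℝ, 0 ≤ c → c • B ⊆ B)
    (hBstrict : B ∩ (-B) = {0}) :
    LMR S B := by
  intro f hf ε hε
  by_cases hfi : Integrable (fun u => ‖FT f u‖ ^ 2) S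
  swap
  · refine ⟨0, IsCBS.zero, ?_⟩
    have e : ∀ u, FT (0 : Ed d → ℂ) u = 0 := fun u => by simp [FT]
    simp only [e, sub_zero]
    rw [integral_undef hfi]
    exact hε
  obtain ⟨O, hO, hOne, hSO⟩ := hstealthy
  set c : ℝ := (2 * Real.pi)⁻¹ with hc
  have hc0 : 0 < c := by positivity
  have hc1 : c ≤ 1 := inv_le_one_of_one_le₀ (by linarith [Real.pi_gt_three])
  let T : Ed d ≃ₜ Ed d := Homeomorph.smulOfNeZero c hc0.ne'
  have hT : ∀ u, T u = c • u := fun u => rfl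
  let S' : Measure (Ed d) := S.map T
  have hW0 : Integrable (Wt (d + 1)) S := by
    refine ⟨(Wt_cont _).aestronglyMeasurable, ?_⟩
    rw [hasFiniteIntegral_iff_ofReal (.of_forall fun u => (Wt_pos _ u).le)]
    exact hint
  have hW : Integrable (Wt (d + 1)) S' := by
    rw [T.measurableEmbedding.integrable_map_iff]
    refine (hW0.const_mul ((c ^ (d + 1))⁻¹)).mono'
      ((Wt_cont _).comp T.continuous).aestronglyMeasurable (.of_forall fun u => ?_)
    rw [Function.comp, Real.norm_of_nonneg (Wt_pos _ _).le, hT, Wt, Wt, ← mul_inv, ← mul_pow]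
    rw [norm_smul, Real.norm_of_nonneg hc0.le]
    gcongr
    nlinarith [norm_nonneg u]
  have hSO' : S' (T '' O) = 0 := by
    rw [T.measurableEmbedding.map_apply, Set.preimage_image_eq _ T.injective]
    exact hSO
  have hFT : ∀ h : Ed d → ℂ, ∀ u, FT h u = 𝓕 h (T u) := fun h u => FT_eq h u
  have hL : MemLp (𝓕 f) 2 S' := by
    rw [memLp_two_iff_integrable_sq_norm (fourier_cont hf.integrable).aestronglyMeasurable,
      T.measurableEmbedding.integrable_map_iff]
    simpa only [Function.comp_def, ← hFT] using hfi
  obtain ⟨h, hh, hlt⟩ := density S' hW (T.isOpenMap O hO) (hOne.image T) hSO' B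
    (span_dual B hBclosed hBconvex hBcone hBstrict) (𝓕 f) hL ε hε
  refine ⟨h, hh, ?_⟩
  rw [T.measurableEmbedding.integral_map] at hlt
  simpa only [hFT] using hlt
end
end

section
/- Let B ⊆ ℝ^d be a closed convex cone with λB ⊆ B for all λ ≥ 0 and B ∩ (−B) = {0}. Let Ψ be a tempered distribution on ℝ^d, i.e. a continuous linear map from the Schwartz space 𝓢(ℝ^d, ℂ) to ℂ. Assume: (i) Ψ(f) = 0 for every Schwartz function f whose closed support is disjoint from B (i.e. Ψ is supported by B); (ii) there is a nonempty open set O ⊆ ℝ^d such that Ψ(ĝ) = 0 for every Schwartz function g with closed support contained in O, where ĝ(u) = ∫_{ℝ^d} e^{−i⟨u,x⟩} g(x) dx (i.e. the Fourier transform of Ψ vanishes on O). Then Ψ = 0. -/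
open MeasureTheory Complex SchwartzMap
open scoped RealInnerProductSpace Pointwise

noncomputable section

open Filter Topology
open scoped ContDiff

section Mul
variable {E : Type*} [NormedAddCommGroup E] [NormedSpace ℝ E]

lemma mul_bound (f : SchwartzMap E ℂ) (p n : ℕ) : ∃ K : ℝ, 0 ≤ K ∧
    ∀ (k : E → ℂ) (A : ℝ), ContDiff ℝ ∞ k → 0 ≤ A →
      (∀ j ≤ n, ∀ x ∈ tsupport (f : E → ℂ), ‖iteratedFDeriv ℝ j k x‖ ≤ A * (1 + ‖x‖) ^ 2) →
      ∀ x, ‖x‖ ^ p * ‖iteratedFDeriv ℝ n (fun y => f y * k y) x‖ ≤ K * A := by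
  refine ⟨∑ i ∈ Finset.range (n + 1), (n.choose i : ℝ) *
    (2 * (SchwartzMap.seminorm ℝ p i f + SchwartzMap.seminorm ℝ (p + 2) i f)), ?_, ?_⟩
  · apply Finset.sum_nonneg
    intro i _
    have h1 := apply_nonneg (SchwartzMap.seminorm ℝ p i) f
    have h2 := apply_nonneg (SchwartzMap.seminorm ℝ (p + 2) i) f
    positivity
  intro k A hk hA hb x
  have h0 := norm_iteratedFDeriv_mul_le (f := (f : E → ℂ)) (g := k) (N := ∞) (f.smooth ⊤) hk x
    (n := n) (by exact_mod_cast le_top)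
  calc _ ≤ ‖x‖ ^ p * ∑ i ∈ Finset.range (n + 1), (n.choose i : ℝ) * ‖iteratedFDeriv ℝ i f x‖ *
            ‖iteratedFDeriv ℝ (n - i) k x‖ := by gcongr
    _ ≤ _ := by
      rw [Finset.mul_sum, Finset.sum_mul]
      apply Finset.sum_le_sum
      intro i hi
      by_cases hx : x ∈ tsupport (f : E → ℂ)
      · have h1 := hb (n - i) (by omega) x hx
        have h2 := SchwartzMap.le_seminorm ℝ p i f x
        have h3 := SchwartzMap.le_seminorm ℝ (p + 2) i f x
        have h4 : (1 + ‖x‖) ^ 2 ≤ 2 * (1 + ‖x‖ ^ 2) := by nlinarith [sq_nonneg (1 - ‖x‖)]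
        calc ‖x‖ ^ p * ((n.choose i : ℝ) * ‖iteratedFDeriv ℝ i f x‖ * ‖iteratedFDeriv ℝ (n - i) k x‖)
            ≤ ‖x‖ ^ p * ((n.choose i : ℝ) * ‖iteratedFDeriv ℝ i f x‖ *
              (A * (2 * (1 + ‖x‖ ^ 2)))) := by gcongr; exact h1.trans (by gcongr)
          _ = (n.choose i : ℝ) * (2 * (‖x‖ ^ p * ‖iteratedFDeriv ℝ i f x‖ +
                ‖x‖ ^ (p + 2) * ‖iteratedFDeriv ℝ i f x‖)) * A := by ring
          _ ≤ _ := by gcongr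
      · have : iteratedFDeriv ℝ i f x = 0 := by
          by_contra hne
          exact hx (support_iteratedFDeriv_subset i hne)
        rw [this]
        have h1 := apply_nonneg (SchwartzMap.seminorm ℝ p i) f
        have h2 := apply_nonneg (SchwartzMap.seminorm ℝ (p + 2) i) f
        simp only [norm_zero, mul_zero, zero_mul]
        positivity

lemma exists_mul (f : SchwartzMap E ℂ) (k : E → ℂ) (hk : ContDiff ℝ ∞ k)
    (h : ∀ j : ℕ, ∃ A : ℝ, 0 ≤ A ∧
      ∀ x ∈ tsupport (f : E → ℂ), ‖iteratedFDeriv ℝ j k x‖ ≤ A * (1 + ‖x‖) ^ 2) :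
    ∃ F : SchwartzMap E ℂ, ∀ x, F x = f x * k x := by
  choose A hA h using h
  refine ⟨⟨fun x => f x * k x, (f.smooth ⊤).mul hk, ?_⟩, fun x => rfl⟩
  intro p n
  obtain ⟨K, hK, hb⟩ := mul_bound f p n
  refine ⟨_, hb k (∑ j ∈ Finset.range (n + 1), A j) hk (Finset.sum_nonneg fun i _ => hA i) ?_⟩
  intro j hj x hx
  refine (h j x hx).trans ?_
  gcongr
  exact Finset.single_le_sum (f := A) (fun i _ => hA i) (Finset.mem_range.2 (by omega))

lemma tendsto_mul_zero {ι : Type*} {l : Filter ι} (f : SchwartzMap E ℂ) (k : ι → E → ℂ)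
    (F : ι → SchwartzMap E ℂ) (A : ℕ → ℝ) (r : ι → ℝ) (hA : ∀ j, 0 ≤ A j)
    (hr : Tendsto r l (𝓝 0))
    (h : ∀ᶠ i in l, ContDiff ℝ ∞ (k i) ∧ 0 ≤ r i ∧ (∀ x, F i x = f x * k i x) ∧
      ∀ j : ℕ, ∀ x ∈ tsupport (f : E → ℂ),
        ‖iteratedFDeriv ℝ j (k i) x‖ ≤ A j * r i * (1 + ‖x‖) ^ 2) :
    Tendsto F l (𝓝 0) := by
  rw [(schwartz_withSeminorms ℝ E ℂ).tendsto_nhds]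
  rintro ⟨p, n⟩ ε hε
  obtain ⟨K, hK, hb⟩ := mul_bound f p n
  set S := ∑ j ∈ Finset.range (n + 1), A j
  have hS : 0 ≤ S := Finset.sum_nonneg fun i _ => hA i
  have hlim : Tendsto (fun i => K * (S * r i)) l (𝓝 0) := by
    simpa using (hr.const_mul S).const_mul K
  filter_upwards [h, hlim.eventually (gt_mem_nhds hε)] with i hi hi2
  obtain ⟨h1, h2, h3, h4⟩ := hi
  rw [sub_zero]
  refine lt_of_le_of_lt ?_ hi2
  have hfun : (F i : E → ℂ) = fun y => f y * k i y := funext h3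
  refine SchwartzMap.seminorm_le_bound ℝ p n (F i) (by positivity) ?_
  rw [hfun]
  refine hb (k i) (S * r i) h1 (by positivity) ?_
  intro j hj x hx
  refine (h4 j x hx).trans ?_
  gcongr
  exact Finset.single_le_sum (f := A) (fun i _ => hA i) (Finset.mem_range.2 (by omega))

end Mul

section ExpEst

/-- the derivatives in `t` of `exp (-s t)`. -/
def ea (j : ℕ) (t : ℝ) (s : ℂ) : ℂ := (-s) ^ j * cexp (-s * t)

/-- the derivative in `s` of `ea j`. -/
def eb (j : ℕ) (t : ℝ) (s : ℂ) : ℂ := -(j * ea (j - 1) t s + t * ea j t s)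

lemma ea_deriv_t (j : ℕ) (t : ℝ) (s : ℂ) :
    HasDerivAt (fun t : ℝ => ea j t s) (ea (j + 1) t s) t := by
  have h : HasDerivAt (fun t : ℝ => -s * (t : ℂ)) (-s * 1) t :=
    (Complex.ofRealCLM.hasDerivAt (x := t)).const_mul (-s)
  have h2 : HasDerivAt (fun t : ℝ => ea j t s) _ t := (h.cexp.const_mul ((-s) ^ j))
  refine h2.congr_deriv ?_
  simp only [ea]; ring

lemma ea_deriv_s (j : ℕ) (t : ℝ) (s : ℂ) : HasDerivAt (ea j t) (eb j t s) s := by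
  have h : HasDerivAt (fun s : ℂ => -s * (t : ℂ)) (-1 * t) s :=
    ((hasDerivAt_id s).neg).mul_const (t : ℂ)
  have h2 : HasDerivAt (ea j t) _ s := (((hasDerivAt_id s).neg).pow j).mul h.cexp
  refine h2.congr_deriv ?_
  simp only [ea, eb, id, Pi.neg_apply, Pi.pow_apply]; ring

lemma eb_deriv_t (j : ℕ) (t : ℝ) (s : ℂ) :
    HasDerivAt (fun t : ℝ => eb j t s) (eb (j + 1) t s) t := by
  have h : HasDerivAt (fun t : ℝ => (t : ℂ)) 1 t := (Complex.ofRealCLM.hasDerivAt (x := t))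
  have h2 : HasDerivAt (fun t : ℝ => eb j t s) _ t :=
    ((((ea_deriv_t (j - 1) t s).const_mul (j : ℂ)).add (h.mul (ea_deriv_t j t s)))).neg
  refine h2.congr_deriv ?_
  simp only [eb]
  rcases j with _ | j
  · simp
  · simp; ring

lemma ea_norm (j : ℕ) (t M : ℝ) (s : ℂ) (ht : -2 ≤ t) (hs : 0 ≤ s.re) (hM : ‖s‖ ≤ M) :
    ‖ea j t s‖ ≤ M ^ j * Real.exp (2 * M) := by
  have h1 : s.re ≤ M := (Complex.re_le_norm s).trans hM
  rw [ea, norm_mul, norm_pow, norm_neg, Complex.norm_exp]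
  have hM0 : 0 ≤ M := (norm_nonneg _).trans hM
  gcongr
  simp only [neg_mul, neg_re, mul_re, ofReal_re, ofReal_im, mul_zero, sub_zero]
  nlinarith

lemma eb_norm (j : ℕ) (t M : ℝ) (s : ℂ) (ht : -2 ≤ t) (hs : 0 ≤ s.re) (hM : ‖s‖ ≤ M)
    (h1M : 1 ≤ M) :
    ‖eb j t s‖ ≤ (j + 1) * (M ^ j * Real.exp (2 * M)) * (1 + |t|) := by
  have hM0 : 0 ≤ M := by linarith
  have h1 := ea_norm j t M s ht hs hM
  have h2 : ‖ea (j - 1) t s‖ ≤ M ^ j * Real.exp (2 * M) :=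
    (ea_norm (j - 1) t M s ht hs hM).trans (by gcongr; omega)
  have hX : 0 ≤ M ^ j * Real.exp (2 * M) := by positivity
  calc ‖eb j t s‖ ≤ j * ‖ea (j - 1) t s‖ + |t| * ‖ea j t s‖ := by
        rw [eb, norm_neg]
        refine (norm_add_le _ _).trans ?_
        rw [norm_mul, norm_mul]; simp
    _ ≤ j * (M ^ j * Real.exp (2 * M)) + |t| * (M ^ j * Real.exp (2 * M)) := by gcongr
    _ ≤ _ := by
      have := abs_nonneg t
      have hj : (0 : ℝ) ≤ j := by positivity
      nlinarith [mul_nonneg hX this, mul_nonneg (mul_nonneg hX this) hj]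

lemma halfball_convex (M : ℝ) : Convex ℝ {s : ℂ | 0 ≤ s.re ∧ ‖s‖ ≤ M} := by
  have h1 : Convex ℝ {s : ℂ | 0 ≤ s.re} := convex_halfSpace_re_ge 0
  have h2 : Convex ℝ {s : ℂ | ‖s‖ ≤ M} := by
    simpa [Metric.closedBall] using convex_closedBall (0 : ℂ) M
  exact h1.inter h2

lemma ea_lip (j : ℕ) (t M : ℝ) (s s0 : ℂ) (ht : -2 ≤ t) (hs : 0 ≤ s.re) (hM : ‖s‖ ≤ M)
    (hs0 : 0 ≤ s0.re) (hM0 : ‖s0‖ ≤ M) (h1M : 1 ≤ M) :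
    ‖ea j t s - ea j t s0‖ ≤ (j + 1) * (M ^ j * Real.exp (2 * M)) * (1 + |t|) * ‖s - s0‖ :=
  Convex.norm_image_sub_le_of_norm_hasDerivWithin_le (f' := eb j t)
    (s := {s : ℂ | 0 ≤ s.re ∧ ‖s‖ ≤ M})
    (fun x _ => (ea_deriv_s j t x).hasDerivWithinAt)
    (fun x hx => eb_norm j t M x ht hx.1 hx.2 h1M) (halfball_convex M) ⟨hs0, hM0⟩ ⟨hs, hM⟩

lemma eb_lip (j : ℕ) (t M : ℝ) (s s0 : ℂ) (ht : -2 ≤ t) (hs : 0 ≤ s.re) (hM : ‖s‖ ≤ M)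
    (hs0 : 0 ≤ s0.re) (hM0 : ‖s0‖ ≤ M) (h1M : 1 ≤ M) :
    ‖eb j t s - eb j t s0‖ ≤
      (j + 1) ^ 2 * (M ^ j * Real.exp (2 * M)) * (1 + |t|) ^ 2 * ‖s - s0‖ := by
  have hMn : 0 ≤ M := by linarith
  have h1 := ea_lip j t M s s0 ht hs hM hs0 hM0 h1M
  have h2 : ‖ea (j - 1) t s - ea (j - 1) t s0‖ ≤
      (j + 1) * (M ^ j * Real.exp (2 * M)) * (1 + |t|) * ‖s - s0‖ := by
    refine (ea_lip (j - 1) t M s s0 ht hs hM hs0 hM0 h1M).trans ?_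
    gcongr <;> omega
  set X := (j + 1) * (M ^ j * Real.exp (2 * M)) * (1 + |t|) * ‖s - s0‖ with hX
  have hX0 : 0 ≤ X := by positivity
  calc ‖eb j t s - eb j t s0‖ =
        ‖(j : ℂ) * (ea (j - 1) t s - ea (j - 1) t s0) + t * (ea j t s - ea j t s0)‖ := by
        rw [← norm_neg]; congr 1; simp only [eb]; ring
    _ ≤ j * ‖ea (j - 1) t s - ea (j - 1) t s0‖ + |t| * ‖ea j t s - ea j t s0‖ := by
        refine (norm_add_le _ _).trans ?_
        rw [norm_mul, norm_mul]; simp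
    _ ≤ j * X + |t| * X := by gcongr
    _ ≤ (j + 1) * (1 + |t|) * X := by
      have := abs_nonneg t
      have hj : (0 : ℝ) ≤ j := by positivity
      nlinarith [mul_nonneg hX0 this, mul_nonneg (mul_nonneg hX0 this) hj]
    _ = _ := by rw [hX]; ring

lemma ea_taylor (j : ℕ) (t M : ℝ) (s s0 : ℂ) (ht : -2 ≤ t) (hs : 0 ≤ s.re) (hM : ‖s‖ ≤ M)
    (hs0 : 0 ≤ s0.re) (hM0 : ‖s0‖ ≤ M) (h1M : 1 ≤ M) :
    ‖ea j t s - ea j t s0 - (s - s0) * eb j t s0‖ ≤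
      (j + 1) ^ 2 * (M ^ j * Real.exp (2 * M)) * (1 + |t|) ^ 2 * ‖s - s0‖ ^ 2 := by
  have hMn : 0 ≤ M := by linarith
  have key := Convex.norm_image_sub_le_of_norm_hasDerivWithin_le
    (f := fun z => ea j t z - z * eb j t s0) (f' := fun z => eb j t z - 1 * eb j t s0)
    (s := {s : ℂ | 0 ≤ s.re ∧ ‖s‖ ≤ M} ∩ Metric.closedBall s0 ‖s - s0‖)
    (C := (j + 1) ^ 2 * (M ^ j * Real.exp (2 * M)) * (1 + |t|) ^ 2 * ‖s - s0‖)
    (x := s0) (y := s)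
    (fun x _ => ((ea_deriv_s j t x).sub ((hasDerivAt_id x).mul_const _)).hasDerivWithinAt)
    (by
      rintro x ⟨hx, hx2⟩
      rw [one_mul]
      refine (eb_lip j t M x s0 ht hx.1 hx.2 hs0 hM0 h1M).trans ?_
      rw [mem_closedBall_iff_norm] at hx2
      gcongr)
    ((halfball_convex M).inter (convex_closedBall _ _))
    ⟨⟨hs0, hM0⟩, by simp⟩ ⟨⟨hs, hM⟩, by simp [dist_eq_norm]⟩
  calc _ = _ := by congr 1; ring
    _ ≤ _ := key
    _ = _ := by ring

lemma iter_of_seq (u : ℕ → ℝ → ℂ) (h : ∀ j t, HasDerivAt (u j) (u (j + 1) t) t) (j : ℕ) :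
    iteratedDeriv j (u 0) = u j := by
  induction j with
  | zero => simp
  | succ j ih => rw [iteratedDeriv_succ, ih]; ext t; exact (h j t).deriv

lemma contDiff_of_seq (u : ℕ → ℝ → ℂ) (h : ∀ j t, HasDerivAt (u j) (u (j + 1) t) t) :
    ContDiff ℝ ∞ (u 0) := by
  refine contDiff_of_differentiable_iteratedDeriv (n := ⊤) ?_
  intro m _
  rw [iter_of_seq u h]
  exact fun t => (h m t).differentiableAt

end ExpEst

section Comp
variable {E : Type*} [NormedAddCommGroup E] [InnerProductSpace ℝ E]

lemma comp_bound (e : E) (k : ℝ → ℂ) (hk : ContDiff ℝ ∞ k) (j : ℕ) (C : ℝ) (hC : 0 ≤ C) (x : E)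
    (h : ‖iteratedDeriv j k ⟪e, x⟫‖ ≤ C * (1 + |⟪e, x⟫|) ^ 2) :
    ‖iteratedFDeriv ℝ j (fun x : E => k ⟪e, x⟫) x‖ ≤
      (‖e‖ ^ j * (1 + ‖e‖) ^ 2) * C * (1 + ‖x‖) ^ 2 := by
  have h1 := (innerSL ℝ e).iteratedFDeriv_comp_right hk x (i := j) (by exact_mod_cast le_top)
  have h2 : (k ∘ (innerSL ℝ e)) = fun x : E => k ⟪e, x⟫ := by ext; simp
  rw [h2] at h1
  rw [h1]
  refine (ContinuousMultilinearMap.norm_compContinuousLinearMap_le _ _).trans ?_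
  rw [norm_iteratedFDeriv_eq_norm_iteratedDeriv]
  simp only [innerSL_apply_norm, Finset.prod_const, Finset.card_univ, Fintype.card_fin,
    innerSL_apply_apply]
  have h3 : |⟪e, x⟫| ≤ ‖e‖ * ‖x‖ := abs_real_inner_le_norm e x
  have h4 : 1 + |⟪e, x⟫| ≤ (1 + ‖e‖) * (1 + ‖x‖) := by
    nlinarith [norm_nonneg e, norm_nonneg x]
  calc _ ≤ (C * ((1 + ‖e‖) * (1 + ‖x‖)) ^ 2) * ‖e‖ ^ j := by
        gcongr; exact h.trans (by gcongr)
    _ = _ := by ring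

end Comp

section Family
variable {E : Type*} [NormedAddCommGroup E] [InnerProductSpace ℝ E]

lemma exists_family (e : E) (Ψ : SchwartzMap E ℂ →L[ℂ] ℂ) (f : SchwartzMap E ℂ)
    (hf : ∀ x ∈ tsupport (f : E → ℂ), -2 ≤ ⟪e, x⟫) :
    ∃ F : ℂ → SchwartzMap E ℂ, (∀ s : ℂ, 0 ≤ s.re → ∀ x, F s x = f x * cexp (-s * (⟪e, x⟫ : ℝ))) ∧
      DifferentiableOn ℂ (fun s => Ψ (F s)) {s : ℂ | 0 ≤ s.re} := by
  have hinner : ContDiff ℝ ∞ (fun x : E => (⟪e, x⟫ : ℝ)) := (innerSL ℝ e).contDiff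
  have hone : ∀ t : ℝ, 1 ≤ 1 + |t| := fun t => by linarith [abs_nonneg t]
  have hFex : ∀ s : ℂ, 0 ≤ s.re → ∃ F : SchwartzMap E ℂ, ∀ x, F x = f x * ea 0 ⟪e, x⟫ s := by
    intro s hs
    have hc := contDiff_of_seq (fun j t => ea j t s) (fun j t => ea_deriv_t j t s)
    refine exists_mul f (fun x => ea 0 ⟪e, x⟫ s) (hc.comp hinner) ?_
    intro j
    refine ⟨_, ?_, fun x hx => comp_bound e (fun t => ea 0 t s) hc j
      (‖s‖ ^ j * Real.exp (2 * ‖s‖)) (by positivity) x ?_⟩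
    · positivity
    · rw [iter_of_seq (fun j t => ea j t s) (fun j t => ea_deriv_t j t s)]
      refine (ea_norm j _ ‖s‖ s (hf x hx) hs le_rfl).trans ?_
      exact le_mul_of_one_le_right (by positivity) (one_le_pow₀ (hone _))
  have hFex' : ∀ s : ℂ, 0 ≤ s.re → ∃ F : SchwartzMap E ℂ, ∀ x, F x = f x * eb 0 ⟪e, x⟫ s := by
    intro s hs
    have hc := contDiff_of_seq (fun j t => eb j t s) (fun j t => eb_deriv_t j t s)
    refine exists_mul f (fun x => eb 0 ⟪e, x⟫ s) (hc.comp hinner) ?_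
    intro j
    refine ⟨_, ?_, fun x hx => comp_bound e (fun t => eb 0 t s) hc j
      ((j + 1) * ((‖s‖ + 1) ^ j * Real.exp (2 * (‖s‖ + 1)))) (by positivity) x ?_⟩
    · positivity
    · rw [iter_of_seq (fun j t => eb j t s) (fun j t => eb_deriv_t j t s)]
      refine (eb_norm j _ (‖s‖ + 1) s (hf x hx) hs (by linarith)
        (by linarith [norm_nonneg s])).trans ?_
      gcongr
      exact le_self_pow₀ (hone _) (by norm_num)
  classical
  let F : ℂ → SchwartzMap E ℂ := fun s => if hs : 0 ≤ s.re then (hFex s hs).choose else 0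
  have hF : ∀ s : ℂ, 0 ≤ s.re → ∀ x, F s x = f x * ea 0 ⟪e, x⟫ s := by
    intro s hs x
    simp only [F, dif_pos hs]
    exact (hFex s hs).choose_spec x
  refine ⟨F, fun s hs x => by rw [hF s hs x]; simp [ea], ?_⟩
  intro s0 hs0
  obtain ⟨F', hF'⟩ := hFex' s0 hs0
  suffices h : HasDerivWithinAt (fun s => Ψ (F s)) (Ψ F') {s : ℂ | 0 ≤ s.re} s0 from
    h.differentiableWithinAt
  rw [hasDerivWithinAt_iff_tendsto_slope]
  have key : Tendsto (fun s => (s - s0)⁻¹ • (F s - F s0) - F')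
      (𝓝[{s : ℂ | 0 ≤ s.re} \ {s0}] s0) (𝓝 0) := by
    set M := ‖s0‖ + 1 with hM
    have h1M : 1 ≤ M := by linarith [norm_nonneg s0]
    let u : ℂ → ℕ → ℝ → ℂ := fun s j t =>
      (s - s0)⁻¹ * (ea j t s - ea j t s0 - (s - s0) * eb j t s0)
    have hu : ∀ s j t, HasDerivAt (u s j) (u s (j + 1) t) t := fun s j t =>
      (((ea_deriv_t j t s).sub (ea_deriv_t j t s0)).sub
        ((eb_deriv_t j t s0).const_mul (s - s0))).const_mul _
    have hMpos : 0 < M := by linarith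
    refine tendsto_mul_zero f (fun s x => u s 0 ⟪e, x⟫) _
      (fun j => (‖e‖ ^ j * (1 + ‖e‖) ^ 2) * ((j + 1) ^ 2 * (M ^ j * Real.exp (2 * M))))
      (fun s => ‖s - s0‖) (fun j => by positivity) ?_ ?_
    · have : Tendsto (fun s : ℂ => ‖s - s0‖) (𝓝 s0) (𝓝 ‖s0 - s0‖) :=
        Continuous.tendsto (by fun_prop) s0
      rw [sub_self, norm_zero] at this
      exact this.mono_left nhdsWithin_le_nhds
    · have hball : ∀ᶠ s in 𝓝[{s : ℂ | 0 ≤ s.re} \ {s0}] s0, s ∈ Metric.ball s0 1 :=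
        nhdsWithin_le_nhds (Metric.ball_mem_nhds s0 one_pos)
      filter_upwards [hball, self_mem_nhdsWithin] with s hsb hs
      have hsM : ‖s‖ ≤ M := by
        rw [mem_ball_iff_norm] at hsb
        have := norm_add_le (s - s0) s0
        rw [sub_add_cancel] at this
        linarith
      have hs1 : 0 ≤ s.re := hs.1
      have hne : s - s0 ≠ 0 := sub_ne_zero.2 hs.2
      have hc := contDiff_of_seq (u s) (hu s)
      refine ⟨hc.comp hinner, norm_nonneg _, ?_, ?_⟩
      · intro x
        have e1 : ((s - s0)⁻¹ • (F s - F s0) - F') x = (s - s0)⁻¹ * (F s x - F s0 x) - F' x := rfl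
        rw [e1, hF s hs1, hF s0 hs0, hF']
        simp only [u]
        field_simp
      · intro j x hx
        refine (comp_bound e (u s 0) hc j
          ((j + 1) ^ 2 * (M ^ j * Real.exp (2 * M)) * ‖s - s0‖) (by positivity) x ?_).trans
            (le_of_eq (by ring))
        rw [iter_of_seq (u s) (hu s)]
        simp only [u]
        rw [norm_mul, norm_inv]
        have := ea_taylor j ⟪e, x⟫ M s s0 (hf x hx) hs1 hsM hs0 (by linarith) h1M
        have hn : 0 < ‖s - s0‖ := norm_pos_iff.2 hne
        rw [inv_mul_le_iff₀ hn]
        refine this.trans (le_of_eq (by ring))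
  have h2 := (Ψ.continuous.tendsto 0).comp key
  have h3 := h2.add_const (Ψ F')
  rw [map_zero, zero_add] at h3
  refine h3.congr ?_
  intro s
  simp [slope_def_field, Function.comp, map_sub, map_smul]
  ring

end Family

section CplxUnique

lemma half_plane_unique (G : ℂ → ℂ) (hG : DifferentiableOn ℂ G {s : ℂ | 0 ≤ s.re}) (δ : ℝ)
    (hδ : 0 < δ) (h0 : ∀ w : ℝ, |w| < δ → G (w * I) = 0) (w : ℝ) : G (w * I) = 0 := by
  have hstep : ∀ η : ℝ, 0 < η → η < δ → G η = 0 := by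
    intro η hη hηδ
    let U : Set ℂ := Set.Ioo (-η) η ×ℂ Set.Ioo (-η) η
    have hcl : closure U = Set.Icc (-η) η ×ℂ Set.Icc (-η) η := by
      rw [Complex.closure_reProdIm, closure_Ioo (by linarith)]
    have hfac : ∀ c : ℂ, (∀ z ∈ closure U, 0 ≤ ((η : ℂ) + c * z).re) →
        DiffContOnCl ℂ (fun z => G (η + c * z)) U := by
      intro c hc
      refine DifferentiableOn.diffContOnCl ?_
      exact hG.comp (by fun_prop) hc
    have hm : ∀ z ∈ closure U, (-η ≤ z.re ∧ z.re ≤ η) ∧ (-η ≤ z.im ∧ z.im ≤ η) := by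
      intro z hz
      rw [hcl, Complex.mem_reProdIm] at hz
      exact hz
    have f1 := hfac 1 (by intro z hz; have := hm z hz; simp; linarith)
    have f2 := hfac (-1) (by intro z hz; have := hm z hz; simp; linarith)
    have f3 := hfac I (by intro z hz; have := hm z hz; simp; linarith)
    have f4 := hfac (-I) (by intro z hz; have := hm z hz; simp; linarith)
    have hP := ((f1.smul f2).smul f3).smul f4
    have hb : Bornology.IsBounded U :=
      (Metric.isBounded_Ioo _ _).reProdIm (Metric.isBounded_Ioo _ _)
    have hz : ∀ z : ℂ, z.re = 0 → |z.im| < δ → G z = 0 := by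
      intro z h1 h2
      have := h0 z.im h2
      rwa [show (z.im * I : ℂ) = z from Complex.ext (by simp [h1]) (by simp)] at this
    have hfr := Complex.eqOn_of_eqOn_frontier hb hP
      (diffContOnCl_const (c := (0 : ℂ))) (by
      intro z hzf
      have hzc := hm z (frontier_subset_closure hzf)
      obtain ⟨⟨a1, a2⟩, a3, a4⟩ := hzc
      have hcases : z.re = η ∨ z.re = -η ∨ z.im = η ∨ z.im = -η := by
        by_contra hcon
        push Not at hcon
        obtain ⟨b1, b2, b3, b4⟩ := hcon
        have hzU : z ∈ U := by
          rw [Complex.mem_reProdIm]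
          exact ⟨⟨lt_of_le_of_ne a1 (Ne.symm b2), lt_of_le_of_ne a2 b1⟩,
            ⟨lt_of_le_of_ne a3 (Ne.symm b4), lt_of_le_of_ne a4 b3⟩⟩
        have hUo : IsOpen U := isOpen_Ioo.reProdIm isOpen_Ioo
        rw [hUo.frontier_eq] at hzf
        exact hzf.2 hzU
      rcases hcases with h | h | h | h
      · have : G (η + -1 * z) = 0 := hz _ (by simp [h]) (by
          simp only [add_im, ofReal_im, neg_mul, one_mul, neg_im, zero_add, abs_neg]
          exact lt_of_le_of_lt (abs_le.2 ⟨a3, a4⟩) hηδ)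
        simp only [this, smul_eq_mul, mul_zero, zero_mul]
      · have : G (η + 1 * z) = 0 := hz _ (by simp [h]) (by
          simp only [add_im, ofReal_im, one_mul, zero_add]
          exact lt_of_le_of_lt (abs_le.2 ⟨a3, a4⟩) hηδ)
        simp only [this, smul_eq_mul, mul_zero, zero_mul]
      · have : G (η + I * z) = 0 := hz _ (by simp [h]) (by
          simp
          exact lt_of_le_of_lt (abs_le.2 ⟨a1, a2⟩) hηδ)
        simp only [this, smul_eq_mul, mul_zero, zero_mul]
      · have : G (η + -I * z) = 0 := hz _ (by simp [h]) (by
          simp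
          exact lt_of_le_of_lt (abs_le.2 ⟨a1, a2⟩) hηδ)
        simp only [this, smul_eq_mul, mul_zero, zero_mul])
    have h0U : (0 : ℂ) ∈ U := by
      rw [Complex.mem_reProdIm]; simp [hη]
    have := hfr h0U
    simpa using this
  have hopen : IsOpen {s : ℂ | 0 < s.re} := isOpen_lt continuous_const Complex.continuous_re
  have han : AnalyticOnNhd ℂ G {s : ℂ | 0 < s.re} :=
    (hG.mono (fun s (hs : 0 < s.re) => hs.le)).analyticOnNhd hopen
  have hpre : IsPreconnected {s : ℂ | 0 < s.re} := (convex_halfSpace_re_gt 0).isPreconnected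
  have hzero : Set.EqOn G 0 {s : ℂ | 0 < s.re} := by
    refine han.eqOn_zero_of_preconnected_of_frequently_eq_zero hpre (z₀ := ((δ / 2 : ℝ) : ℂ))
      (by simp [hδ]) ?_
    have ht : Tendsto (fun x : ℝ => (x : ℂ)) (𝓝[≠] (δ / 2)) (𝓝[≠] ((δ / 2 : ℝ) : ℂ)) := by
      refine tendsto_nhdsWithin_of_tendsto_nhds_of_eventually_within _
        ((Complex.continuous_ofReal.tendsto _).mono_left nhdsWithin_le_nhds) ?_
      filter_upwards [self_mem_nhdsWithin] with x hx
      exact fun h => hx (Complex.ofReal_injective h)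
    refine ht.frequently ?_
    refine Eventually.frequently ?_
    have : ∀ᶠ x in 𝓝 (δ / 2), x ∈ Set.Ioo 0 δ := Ioo_mem_nhds (by linarith) (by linarith)
    filter_upwards [nhdsWithin_le_nhds this] with x hx
    exact hstep x hx.1 hx.2
  have hc := hG.continuousOn (w * I) (by simp)
  have ht : Tendsto (fun x : ℝ => (x : ℂ) + w * I) (𝓝[>] 0) (𝓝[{s : ℂ | 0 ≤ s.re}] (w * I)) := by
    refine tendsto_nhdsWithin_of_tendsto_nhds_of_eventually_within _ ?_ ?_
    · have : Tendsto (fun x : ℝ => (x : ℂ) + w * I) (𝓝 0) (𝓝 (((0 : ℝ) : ℂ) + w * I)) :=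
        Continuous.tendsto (by fun_prop) 0
      simp only [ofReal_zero, zero_add] at this
      exact this.mono_left nhdsWithin_le_nhds
    · filter_upwards [self_mem_nhdsWithin] with x hx
      have : (0 : ℝ) < x := hx
      simp [this.le]
  have h1 := hc.tendsto.comp ht
  refine tendsto_nhds_unique h1 (tendsto_const_nhds.congr' ?_)
  filter_upwards [self_mem_nhdsWithin] with x hx
  have : (0 : ℝ) < x := hx
  exact (hzero (by simpa using this)).symm

end CplxUnique

section Cone
variable {E : Type*} [NormedAddCommGroup E] [InnerProductSpace ℝ E] [FiniteDimensional ℝ E]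

lemma cone_sep (B : Set E) (hBclosed : IsClosed B) (hBconvex : Convex ℝ B)
    (hBcone : ∀ c : ℝ, 0 ≤ c → c • B ⊆ B) (h0 : (0 : E) ∈ B) (v : E)
    (hv : ∀ e : E, (∀ b ∈ B, 0 ≤ ⟪e, b⟫) → ⟪e, v⟫ = 0) : v ∈ B := by
  by_contra hvB
  obtain ⟨f, u, h1, h2⟩ := geometric_hahn_banach_closed_point hBconvex hBclosed hvB
  have hu : 0 < u := by simpa using h1 0 h0
  have hle : ∀ b ∈ B, f b ≤ 0 := by
    intro b hb
    by_contra hpos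
    push Not at hpos
    have hmem : (u / f b) • b ∈ B := hBcone _ (by positivity) (Set.smul_mem_smul_set hb)
    have := h1 _ hmem
    rw [map_smul, smul_eq_mul, div_mul_cancel₀ _ hpos.ne'] at this
    exact lt_irrefl _ this
  have := hv (-(InnerProductSpace.toDual ℝ E).symm f) (by
    intro b hb
    rw [inner_neg_left, InnerProductSpace.toDual_symm_apply]
    linarith [hle b hb])
  rw [inner_neg_left, InnerProductSpace.toDual_symm_apply] at this
  linarith

lemma dual_span (B : Set E) (hBclosed : IsClosed B) (hBconvex : Convex ℝ B)
    (hBcone : ∀ c : ℝ, 0 ≤ c → c • B ⊆ B) (hBstrict : B ∩ (-B) = {0}) :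
    Submodule.span ℝ {e : E | ∀ b ∈ B, 0 ≤ ⟪e, b⟫} = ⊤ := by
  have h0 : (0 : E) ∈ B := by
    have : (0 : E) ∈ B ∩ (-B) := by rw [hBstrict]; rfl
    exact this.1
  rw [← Submodule.orthogonal_eq_bot_iff, Submodule.eq_bot_iff]
  intro v hv
  have hv2 : ∀ e : E, (∀ b ∈ B, 0 ≤ ⟪e, b⟫) → ⟪e, v⟫ = 0 := fun e he =>
    (Submodule.mem_orthogonal _ v).1 hv e (Submodule.subset_span he)
  have a1 := cone_sep B hBclosed hBconvex hBcone h0 v hv2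
  have a2 := cone_sep B hBclosed hBconvex hBcone h0 (-v) (fun e he => by
    rw [inner_neg_right, hv2 e he, neg_zero])
  have : v ∈ B ∩ (-B) := ⟨a1, by simpa using a2⟩
  rw [hBstrict] at this
  exact this

end Cone

section Local
variable {E : Type*} [NormedAddCommGroup E] [InnerProductSpace ℝ E] [FiniteDimensional ℝ E]

lemma zero_of_compact (T : SchwartzMap E ℂ →L[ℂ] ℂ)
    (h : ∀ g : SchwartzMap E ℂ, HasCompactSupport (g : E → ℂ) → T g = 0) : T = 0 := by
  ext f
  let θ : ContDiffBump (0 : E) := ⟨1, 2, one_pos, one_lt_two⟩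
  let θc : E → ℂ := fun x => (θ x : ℂ)
  have hθ : ContDiff ℝ ∞ θc := Complex.ofRealCLM.contDiff.comp θ.contDiff
  have hθs : HasCompactSupport θc := θ.hasCompactSupport.comp_left (g := Complex.ofReal) rfl
  let θS : SchwartzMap E ℂ := hθs.toSchwartzMap hθ
  let κ : E → ℂ := (fun _ => (1 : ℂ)) - θc
  have hκ : ContDiff ℝ ∞ κ := contDiff_const.sub hθ
  have hκb : ∀ j : ℕ, ∃ C, 0 ≤ C ∧ ∀ x, j ≠ 0 → ‖iteratedFDeriv ℝ j κ x‖ ≤ C := by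
    intro j
    refine ⟨SchwartzMap.seminorm ℝ 0 j θS, apply_nonneg _ _, fun x hj => ?_⟩
    have h1 : iteratedFDeriv ℝ j κ x = 0 - iteratedFDeriv ℝ j θc x := by
      have := iteratedFDeriv_sub_apply (𝕜 := ℝ) (x := x) (i := j) (f := fun _ : E => (1 : ℂ))
        (g := θc) contDiffAt_const (hθ.of_le (by exact_mod_cast le_top)).contDiffAt
      rw [iteratedFDeriv_const_of_ne hj] at this
      exact this
    rw [h1, zero_sub, norm_neg]
    exact SchwartzMap.norm_iteratedFDeriv_le_seminorm ℝ θS j x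
  choose C hC hκb using hκb
  let c : ℕ → ℝ := fun n => 1 / ((n : ℝ) + 1)
  have hc0 : ∀ n, 0 < c n := fun n => by positivity
  have hc1 : ∀ n, c n ≤ 1 := fun n => by
    simp only [c]; rw [div_le_one (by positivity)]; linarith [(Nat.cast_nonneg n : (0 : ℝ) ≤ n)]
  have hθn : ∀ n, HasCompactSupport (fun x => θc (c n • x)) := fun n =>
    hθs.comp_homeomorph (Homeomorph.smulOfNeZero (c n) (hc0 n).ne')
  have hθnd : ∀ n, ContDiff ℝ ∞ (fun x => θc (c n • x)) := fun n =>
    hθ.comp (contDiff_const_smul _)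
  have hcs : ∀ n, HasCompactSupport (fun x => f x * θc (c n • x)) := fun n => (hθn n).mul_left
  let H : ℕ → SchwartzMap E ℂ := fun n => (hcs n).toSchwartzMap ((f.smooth ⊤).mul (hθnd n))
  have hH : ∀ n x, H n x = f x * θc (c n • x) := fun n x => rfl
  have hT : ∀ n, T (H n) = 0 := fun n => h _ (hcs n)
  have key : Tendsto (fun n => f - H n) atTop (𝓝 0) := by
    refine tendsto_mul_zero f (fun n x => κ (c n • x)) _ (fun j => C j + 1) c
      (fun j => by linarith [hC j]) tendsto_one_div_add_atTop_nhds_zero_nat ?_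
    refine Eventually.of_forall fun n => ⟨hκ.comp (contDiff_const_smul _), (hc0 n).le, ?_, ?_⟩
    · intro x
      have : (f - H n) x = f x - H n x := rfl
      rw [this, hH]
      simp only [κ, Pi.sub_apply]; ring
    · intro j x _
      have hsq : 1 ≤ (1 + ‖x‖) ^ 2 := one_le_pow₀ (by linarith [norm_nonneg x])
      rw [iteratedFDeriv_comp_const_smul (c n) (hκ.of_le (by exact_mod_cast le_top))]
      rw [norm_smul, norm_pow, Real.norm_of_nonneg (hc0 n).le]
      rcases eq_or_ne j 0 with rfl | hj
      · rw [norm_iteratedFDeriv_zero, pow_zero, one_mul]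
        by_cases hx : ‖c n • x‖ ≤ 1
        · have : κ (c n • x) = 0 := by
            have := θ.one_of_mem_closedBall (x := c n • x) (by simpa using hx)
            simp [κ, θc, this]
          rw [this, norm_zero]
          have := hC 0
          have := (hc0 n).le
          positivity
        · push Not at hx
          have h1 : ‖κ (c n • x)‖ ≤ 1 := by
            have : κ (c n • x) = ((1 - θ (c n • x) : ℝ) : ℂ) := by simp [κ, θc]
            rw [this, Complex.norm_real, Real.norm_eq_abs, abs_le]
            constructor <;> linarith [θ.le_one (x := c n • x), θ.nonneg' (c n • x)]
          rw [norm_smul, Real.norm_of_nonneg (hc0 n).le] at hx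
          have h3 : ‖x‖ ≤ (1 + ‖x‖) ^ 2 := by nlinarith [norm_nonneg x]
          calc ‖κ (c n • x)‖ ≤ 1 * c n * ‖x‖ := by linarith
            _ ≤ (C 0 + 1) * c n * (1 + ‖x‖) ^ 2 := by
              have := hC 0
              have := (hc0 n).le
              gcongr; linarith
      · have h1 := hκb j (c n • x) hj
        have h2 : c n ^ j ≤ c n := pow_le_of_le_one (hc0 n).le (hc1 n) hj
        have := hC j
        have := (hc0 n).le
        calc c n ^ j * ‖iteratedFDeriv ℝ j κ (c n • x)‖ ≤ c n * C j := by gcongr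
          _ ≤ (C j + 1) * c n * 1 := by nlinarith
          _ ≤ _ := by gcongr
  have h2 := (T.continuous.tendsto 0).comp key
  have h3 : (T ∘ fun n => f - H n) = fun _ => T f := by
    ext n; simp [hT]
  rw [h3, map_zero] at h2
  exact tendsto_nhds_unique tendsto_const_nhds h2

lemma zero_of_local (T : SchwartzMap E ℂ →L[ℂ] ℂ) (r : ℝ) (hr : 0 < r)
    (h : ∀ v : E, ∀ g : SchwartzMap E ℂ, HasCompactSupport (g : E → ℂ) →
      tsupport (g : E → ℂ) ⊆ Metric.ball v r → T g = 0) : T = 0 := by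
  refine zero_of_compact T fun g hg => ?_
  let φ : ∀ v : E, ContDiffBump v := fun v => ⟨r / 4, r / 2, by positivity, by linarith⟩
  obtain ⟨t, -, htc⟩ := IsCompact.elim_nhds_subcover (s := tsupport (g : E → ℂ)) hg
    (fun v => Metric.ball v (r / 2)) (fun v _ => Metric.ball_mem_nhds v (by positivity))
  let S : E → ℂ := fun x => ((∑ v ∈ t, φ v x : ℝ) : ℂ)
  have hS : ContDiff ℝ ∞ S :=
    Complex.ofRealCLM.contDiff.comp (ContDiff.sum fun v _ => (φ v).contDiff)
  have hSne : ∀ x ∈ tsupport (g : E → ℂ), S x ≠ 0 := by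
    intro x hx
    have := htc hx
    simp only [Set.mem_iUnion] at this
    obtain ⟨v, hv, hxv⟩ := this
    have hpos : 0 < φ v x := (φ v).pos_of_mem_ball hxv
    have : 0 < ∑ v ∈ t, φ v x := Finset.sum_pos' (fun v _ => (φ v).nonneg) ⟨v, hv, hpos⟩
    simp only [S]
    exact_mod_cast this.ne'
  let q : E → ℂ := fun x => g x / S x
  have hq : ContDiff ℝ ∞ q := by
    rw [contDiff_iff_contDiffAt]
    intro x
    by_cases hx : x ∈ tsupport (g : E → ℂ)
    · have e : q = fun x => g x * (S x)⁻¹ := by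
        funext y
        simp only [q, div_eq_mul_inv]
      rw [e]
      exact ((g.smooth ⊤).contDiffAt).mul (hS.contDiffAt.inv (hSne x hx))
    · have h0 : (g : E → ℂ) =ᶠ[𝓝 x] 0 := notMem_tsupport_iff_eventuallyEq.1 hx
      have : q =ᶠ[𝓝 x] fun _ => 0 := by
        filter_upwards [h0] with y hy
        simp [q, hy]
      exact contDiffAt_const.congr_of_eventuallyEq this
  have hqt : ∀ v, HasCompactSupport (fun x => ((φ v x : ℝ) : ℂ) * q x) := by
    intro v
    refine HasCompactSupport.mul_left (hg.mono ?_)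
    intro x hx
    simp only [Function.mem_support, q] at hx ⊢
    intro h0; exact hx (by simp [h0])
  let Q : E → SchwartzMap E ℂ := fun v => (hqt v).toSchwartzMap
    ((Complex.ofRealCLM.contDiff.comp (φ v).contDiff).mul hq)
  have hQ : ∀ v x, Q v x = ((φ v x : ℝ) : ℂ) * q x := fun v x => rfl
  have hsum : g = ∑ v ∈ t, Q v := by
    ext x
    have : (∑ v ∈ t, Q v) x = ∑ v ∈ t, Q v x := by simp
    rw [this]
    simp only [hQ]
    rw [← Finset.sum_mul]
    by_cases hx : x ∈ tsupport (g : E → ℂ)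
    · have := hSne x hx
      have e1 : (∑ v ∈ t, ((φ v x : ℝ) : ℂ)) = S x := by simp [S]
      rw [e1]; simp only [q]; field_simp
    · have : g x = 0 := image_eq_zero_of_notMem_tsupport hx
      simp [q, this]
  rw [hsum, map_sum]
  refine Finset.sum_eq_zero fun v _ => h v (Q v) (hqt v) ?_
  have h1 : tsupport (Q v : E → ℂ) ⊆ Metric.closedBall v (r / 2) := by
    refine closure_minimal ?_ Metric.isClosed_closedBall
    intro x hx
    have : φ v x ≠ 0 := by
      intro h0; exact hx (by rw [hQ, h0]; simp)
    have : x ∈ Function.support (φ v) := this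
    rw [(φ v).support_eq] at this
    exact Metric.ball_subset_closedBall this
  exact h1.trans (Metric.closedBall_subset_ball (by linarith))

end Local

section FTsec
variable {E : Type*} [NormedAddCommGroup E] [InnerProductSpace ℝ E] [FiniteDimensional ℝ E]
  [MeasurableSpace E] [BorelSpace E]

lemma two_pi_inv_ne : (2 * Real.pi)⁻¹ ≠ 0 := by positivity

/-- dilation by `1/(2π)`. -/
def dil : E ≃L[ℝ] E := ContinuousLinearEquiv.smulLeft (Units.mk0 _ two_pi_inv_ne)

lemma dil_apply (x : E) : dil x = (2 * Real.pi)⁻¹ • x := rfl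

/-- the Fourier transform in the normalization of the statement. -/
def FTr : SchwartzMap E ℂ →L[ℂ] SchwartzMap E ℂ :=
  (SchwartzMap.compCLMOfContinuousLinearEquiv ℂ dil).comp (SchwartzMap.fourierTransformCLM ℂ)

lemma FTr_apply (g : SchwartzMap E ℂ) (u : E) :
    FTr g u = ∫ x : E, Complex.exp (-Complex.I * (⟪u, x⟫ : ℝ)) * g x := by
  have h1 : FTr g u = FourierTransform.fourier (g : E → ℂ) ((2 * Real.pi)⁻¹ • u) := rfl
  rw [h1, Real.fourier_eq']
  congr 1
  ext x
  rw [smul_eq_mul]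
  congr 2
  rw [inner_smul_right, real_inner_comm]
  push_cast
  have : (Real.pi : ℂ) ≠ 0 := by exact_mod_cast Real.pi_ne_zero
  field_simp

lemma FTr_surj (f : SchwartzMap E ℂ) : ∃ g, FTr g = f := by
  refine ⟨FourierTransformInv.fourierInv
    (SchwartzMap.compCLMOfContinuousLinearEquiv ℂ (dil (E := E)).symm f), ?_⟩
  have h1 : ∀ g : SchwartzMap E ℂ, FTr g =
    SchwartzMap.compCLMOfContinuousLinearEquiv ℂ dil (FourierTransform.fourier g) := fun g => rfl
  rw [h1, FourierInvPair.fourier_fourierInv_eq]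
  ext x
  simp

lemma FTr_translate (g : SchwartzMap E ℂ) (a u : E) :
    FTr (SchwartzMap.compSubConstCLM ℂ a g) u = FTr g u * cexp (-I * (⟪u, a⟫ : ℝ)) := by
  rw [FTr_apply, FTr_apply]
  rw [← integral_sub_right_eq_self (fun x => cexp (-I * (⟪u, x⟫ : ℝ)) * g x) a,
    ← integral_mul_const]
  congr 1
  ext x
  rw [SchwartzMap.compSubConstCLM_apply, inner_sub_right, mul_right_comm, ← Complex.exp_add]
  congr 2
  push_cast; ring

lemma smoothTransition_growth : Function.HasTemperateGrowth Real.smoothTransition := by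
  have hd : ContDiff ℝ ∞ Real.smoothTransition := Real.smoothTransition.contDiff
  refine Function.HasTemperateGrowth.of_fderiv (k := 0) (C := 1) ?_
    (hd.differentiable (by simp)) ?_
  · refine HasCompactSupport.hasTemperateGrowth ?_ (hd.fderiv_right (m := ∞) (by simp))
    refine HasCompactSupport.intro (isCompact_Icc (a := (0 : ℝ)) (b := 1)) ?_
    intro x hx
    rw [Set.mem_Icc, not_and_or, not_le, not_le] at hx
    rcases hx with hx | hx
    · have : Real.smoothTransition =ᶠ[𝓝 x] fun _ => 0 := by
        filter_upwards [gt_mem_nhds hx] with y hy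
        exact Real.smoothTransition.zero_of_nonpos hy.le
      rw [this.fderiv_eq]; simp
    · have : Real.smoothTransition =ᶠ[𝓝 x] fun _ => 1 := by
        filter_upwards [lt_mem_nhds hx] with y hy
        exact Real.smoothTransition.one_of_one_le hy.le
      rw [this.fderiv_eq]; simp
  · intro x
    rw [Real.norm_of_nonneg (Real.smoothTransition.nonneg x)]
    simpa using Real.smoothTransition.le_one x

lemma step (B : Set E) (Ψ : SchwartzMap E ℂ →L[ℂ] ℂ)
    (hsupp : ∀ f : SchwartzMap E ℂ,
      Disjoint (closure (Function.support (f : E → ℂ))) B → Ψ f = 0)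
    (e : E) (he : ∀ b ∈ B, 0 ≤ ⟪e, b⟫) (g : SchwartzMap E ℂ) (δ : ℝ) (hδ : 0 < δ)
    (h : ∀ w : ℝ, |w| < δ → Ψ (FTr (SchwartzMap.compSubConstCLM ℂ (w • e) g)) = 0) (w : ℝ) :
    Ψ (FTr (SchwartzMap.compSubConstCLM ℂ (w • e) g)) = 0 := by
  let χ : E → ℂ := fun x => ((Real.smoothTransition (⟪e, x⟫ + 2) : ℝ) : ℂ)
  have hχ : χ.HasTemperateGrowth := by
    have h1 : Function.HasTemperateGrowth (fun x : E => (⟪e, x⟫ : ℝ) + 2) :=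
      (innerSL ℝ e).hasTemperateGrowth.add (Function.HasTemperateGrowth.const 2)
    exact (Complex.ofRealCLM).hasTemperateGrowth.comp (smoothTransition_growth.comp h1)
  let f : SchwartzMap E ℂ := SchwartzMap.smulLeftCLM ℂ χ (FTr g)
  have hf : ∀ x, f x = χ x * FTr g x := fun x => SchwartzMap.smulLeftCLM_apply_apply hχ _ x
  have hcont : Continuous (fun x : E => (⟪e, x⟫ : ℝ)) := by fun_prop
  have hfs : ∀ x ∈ tsupport (f : E → ℂ), -2 ≤ ⟪e, x⟫ := by
    refine closure_minimal (t := {x : E | -2 ≤ ⟪e, x⟫}) ?_ (isClosed_le continuous_const hcont)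
    intro x hx
    by_contra hlt
    simp only [Set.mem_setOf_eq, not_le] at hlt
    refine hx ?_
    rw [hf]
    simp [χ, Real.smoothTransition.zero_of_nonpos (show (⟪e, x⟫ : ℝ) + 2 ≤ 0 by linarith)]
  obtain ⟨F, hF, hdiff⟩ := exists_family e Ψ f hfs
  have hkey : ∀ w : ℝ, Ψ (F (w * I)) = Ψ (FTr (SchwartzMap.compSubConstCLM ℂ (w • e) g)) := by
    intro w
    rw [← sub_eq_zero, ← map_sub]
    apply hsupp
    have hcl : closure (Function.support ((F (w * I) -
        FTr (SchwartzMap.compSubConstCLM ℂ (w • e) g) : SchwartzMap E ℂ) : E → ℂ)) ⊆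
        {x : E | ⟪e, x⟫ ≤ -1} := by
      refine closure_minimal ?_ (isClosed_le hcont continuous_const)
      intro x hx
      by_contra hlt
      simp only [Set.mem_setOf_eq, not_le] at hlt
      refine hx ?_
      have e1 : (F (w * I) - FTr (SchwartzMap.compSubConstCLM ℂ (w • e) g)) x =
        F (w * I) x - FTr (SchwartzMap.compSubConstCLM ℂ (w • e) g) x := rfl
      rw [e1, hF _ (by simp), FTr_translate, hf]
      have e2 : χ x = 1 := by
        simp only [χ]
        rw [Real.smoothTransition.one_of_one_le (by linarith)]; simp
      rw [e2, one_mul, inner_smul_right, real_inner_comm, sub_eq_zero]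
      congr 2
      push_cast; ring
    refine Set.disjoint_left.2 fun x hx hxB => ?_
    have h1 : ⟪e, x⟫ ≤ -1 := hcl hx
    linarith [he x hxB]
  rw [← hkey]
  exact half_plane_unique (fun s => Ψ (F s)) hdiff δ hδ (fun w hw => by
    simp only [hkey]; exact h w hw) w

lemma tsupport_translate (g : SchwartzMap E ℂ) (a c : E) (r : ℝ)
    (h : tsupport (g : E → ℂ) ⊆ Metric.ball c r) :
    tsupport (SchwartzMap.compSubConstCLM ℂ a g : E → ℂ) ⊆ Metric.ball (c + a) r := by
  have : (SchwartzMap.compSubConstCLM ℂ a g : E → ℂ) = (g : E → ℂ) ∘ (Homeomorph.subRight a) := rfl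
  rw [this, tsupport_comp_eq_preimage]
  intro x hx
  have := h hx
  rw [mem_ball_iff_norm] at this ⊢
  convert this using 2
  change x - (c + a) = x - a - c
  abel

lemma compact_of_ball (g : SchwartzMap E ℂ) (c : E) (r : ℝ)
    (h : tsupport (g : E → ℂ) ⊆ Metric.ball c r) : HasCompactSupport (g : E → ℂ) :=
  (ProperSpace.isCompact_closedBall c r).of_isClosed_subset (isClosed_tsupport _)
    (h.trans Metric.ball_subset_closedBall)

end FTsec

theorem shapiro_tempered_distribution {d : ℕ}
    (B : Set (Ed d)) (hBclosed : IsClosed B) (hBconvex : Convex ℝ B)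
    (hBcone : ∀ c : ℝ, 0 ≤ c → c • B ⊆ B)
    (hBstrict : B ∩ (-B) = {0})
    (Ψ : SchwartzMap (Ed d) ℂ →L[ℂ] ℂ)
    (hsupp : ∀ f : SchwartzMap (Ed d) ℂ,
      Disjoint (closure (Function.support (f : Ed d → ℂ))) B → Ψ f = 0)
    (hFT : ∃ O : Set (Ed d), IsOpen O ∧ O.Nonempty ∧
      ∀ g ψg : SchwartzMap (Ed d) ℂ,
        (∀ u, ψg u = ∫ x : Ed d, Complex.exp (-Complex.I * (⟪u, x⟫ : ℝ)) * g x) →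
        closure (Function.support (g : Ed d → ℂ)) ⊆ O → Ψ ψg = 0) :
    Ψ = 0 := by
  obtain ⟨O, hO, ⟨o, ho⟩, hvan⟩ := hFT
  obtain ⟨r, hr, hrO⟩ := Metric.isOpen_iff.1 hO o ho
  let V : Set (Ed d) := {v | ∀ g : SchwartzMap (Ed d) ℂ,
    tsupport (g : Ed d → ℂ) ⊆ Metric.ball (o + v) r → Ψ (FTr g) = 0}
  have h0V : (0 : Ed d) ∈ V := by
    intro g hg
    rw [add_zero] at hg
    exact hvan g (FTr g) (FTr_apply g) (hg.trans hrO)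
  have hstep : ∀ e : Ed d, (∀ b ∈ B, 0 ≤ ⟪e, b⟫) → ∀ t : ℝ, ∀ u ∈ V, u + t • e ∈ V := by
    intro e he t u hu g hg
    let g' := SchwartzMap.compSubConstCLM ℂ (-(t • e)) g
    have hg' : tsupport (g' : Ed d → ℂ) ⊆ Metric.ball (o + u) r := by
      have := tsupport_translate g (-(t • e)) _ r hg
      have e2 : o + (u + t • e) + -(t • e) = o + u := by abel
      rwa [e2] at this
    have hback : SchwartzMap.compSubConstCLM ℂ (t • e) g' = g := by
      simp [g']
    rw [← hback]
    obtain ⟨r', hr', hsub⟩ := exists_lt_subset_ball (isClosed_tsupport (g' : Ed d → ℂ)) hg'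
    refine step B Ψ hsupp e he g' ((r - r') / (‖e‖ + 1))
      (div_pos (by linarith) (by positivity)) ?_ t
    intro w hw
    refine hu _ ((tsupport_translate g' (w • e) _ r' hsub).trans ?_)
    apply Metric.ball_subset_ball'
    rw [dist_eq_norm, add_sub_cancel_left, norm_smul, Real.norm_eq_abs]
    rw [lt_div_iff₀ (by positivity)] at hw
    nlinarith [abs_nonneg w, norm_nonneg e]
  have hall : ∀ v : Ed d, v ∈ V := by
    intro v
    have hv : v ∈ Submodule.span ℝ {e : Ed d | ∀ b ∈ B, 0 ≤ ⟪e, b⟫} := by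
      rw [dual_span B hBclosed hBconvex hBcone hBstrict]; trivial
    have : ∀ t : ℝ, ∀ u ∈ V, u + t • v ∈ V := by
      induction hv using Submodule.span_induction with
      | mem x hx => exact hstep x hx
      | zero => intro t u hu; simpa using hu
      | add x y _ _ hx hy =>
        intro t u hu
        rw [smul_add, ← add_assoc]
        exact hy t _ (hx t u hu)
      | smul a x _ hx =>
        intro t u hu
        rw [smul_smul]
        exact hx _ u hu
    simpa using this 1 0 h0V
  have hT : Ψ.comp FTr = 0 := by
    refine zero_of_local _ r hr ?_
    intro v g _ hg
    refine hall (v - o) g ?_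
    rwa [add_sub_cancel]
  ext f
  obtain ⟨g, rfl⟩ := FTr_surj f
  exact DFunLike.congr_fun hT g
end
end
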